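/- Let Φ : 𝔸 → ℂ be Φ(x) = 1_{[0,1]}(x_∞) · ∏_p 1_{ℤ_p}(x_p). For j ∈ ℤ and each prime m, let V_j^{[m]} ⊆ L²(𝔸, μ) be the closed linear span of the functions x ↦ 2^{j/2} 1_{[0,1]}(2^j x_∞ − a_∞) · ∏_{q≤m} q^{j/2} 1_{ℤ_q}(q^{−j} x_q − a_q) · ∏_{q>m} 1_{ℤ_q}(x_q), over all a_∞ ∈ ℤ and a_q ∈ I_q for primes q ≤ m; let V_j be the closure of the linear span of ⋃_m V_j^{[m]}. Then: (a) V_j ⊆ V_{j+1} for all j ∈ ℤ; (b) ⋃_{j∈ℤ} V_j is dense in L²(𝔸, μ); (c) ⋂_{j∈ℤ} V_j = {0}; (d) for each prime m and each j ∈ ℤ, f ∈ V_j^{[m]} if and only if D_m f ∈ V_{j+1}^{[m]}, where (D_m f)(x) = (2 · ∏_{q≤m} q)^{1/2} · f(2x_∞, x_2/2, x_3/3, …, x_m/m, (x_q)_{q>m}); (e) the functions x ↦ Φ(x − â), where â ranges over I_𝔸 = {â ∈ 𝔸 : â_∞ ∈ ℤ, â_p ∈ I_p for all p, and â_p = 0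 for all but finitely many p}, form an orthonormal basis of V_0. -/

import Mathlib

open MeasureTheory Complex
open scoped Classical

noncomputable section

variable (p : ℕ) [Fact p.Prime]

instance : MeasurableSpace ℚ_[p] := borel _
instance : BorelSpace ℚ_[p] := ⟨rfl⟩

instance (q : Nat.Primes) : Fact (q : ℕ).Prime := ⟨q.2⟩

/-- The indicator function of `ℤ_p` inside `ℚ_p`. -/
def indZ (x : ℚ_[p]) : ℂ := if ‖x‖ ≤ 1 then 1 else 0

/-- The fractional part of a `p`-adic number: the unique rational `r ∈ ℤ[1/p] ∩ [0,1)`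
with `x - r ∈ ℤ_p`. -/
def padicFract (x : ℚ_[p]) : ℚ :=
  if h : ∃ r : ℚ, (0 ≤ r ∧ r < 1 ∧ ∃ (m : ℤ) (n : ℕ), r = m / p ^ n) ∧ ‖x - (r : ℚ_[p])‖ ≤ 1
  then h.choose else 0

/-- The standard additive character `χ_p` of `ℚ_p`. -/
def padicChar (x : ℚ_[p]) : ℂ := Complex.exp (2 * Real.pi * Complex.I * (padicFract p x : ℂ))

/-- The Kozyrev wavelet `ψ⁰_{k;ja}`. -/
def kozyrev (k : ℕ) (j : ℤ) (a : ℚ_[p]) (x : ℚ_[p]) : ℂ :=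
  ((p : ℝ) ^ ((j : ℝ) / 2) : ℝ) *
    padicChar p ((k : ℚ_[p]) / (p : ℚ_[p]) * ((p : ℚ_[p]) ^ (-j) * x - a)) *
    indZ p ((p : ℚ_[p]) ^ (-j) * x - a)

/-- The set `I_p = ℤ[1/p] ∩ [0,1)` of shifts, viewed inside `ℚ_p`. -/
def Ip : Set ℚ_[p] := {a | ∃ (m n : ℕ), m < p ^ n ∧ a = (m : ℚ_[p]) / (p : ℚ_[p]) ^ n}


/-- The adele ring of `ℚ`, as the restricted product of `ℝ` and of the fields `ℚ_p`
with respect to the subrings `ℤ_p`. -/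
def Adele : Type :=
  {x : ℝ × (∀ q : Nat.Primes, ℚ_[(q : ℕ)]) //
    ∀ᶠ q : Nat.Primes in Filter.cofinite, ‖x.2 q‖ ≤ 1}

instance : MeasurableSpace Adele := by unfold Adele; infer_instance

/-- The set of primes `q ≤ m` is finite. -/
theorem primesLE_finite (m : Nat.Primes) : {q : Nat.Primes | (q : ℕ) ≤ (m : ℕ)}.Finite := by
  have h : {q : Nat.Primes | (q : ℕ) ≤ (m : ℕ)}
      = (fun q : Nat.Primes => (q : ℕ)) ⁻¹' Set.Iic (m : ℕ) := rfl
  rw [h]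
  exact Set.Finite.preimage (Nat.Primes.coe_nat_injective.injOn) (Set.finite_Iic _)

open MeasureTheory

/-- The indicator function of the unit interval `[0,1] ⊆ ℝ`. -/
def indI (t : ℝ) : ℂ := if t ∈ Set.Icc (0 : ℝ) 1 then 1 else 0

/-- The adelic scaling function `Φ(x) = 1_{[0,1]}(x_∞) ∏_q 1_{ℤ_q}(x_q)`. -/
def PhiAdele (x : Adele) : ℂ := indI x.1.1 * ∏' q : Nat.Primes, indZ q (x.1.2 q)

/-- The shifted scaling functions generating `V_j^{[m]}`:
`x ↦ 2^{j/2} 1_{[0,1]}(2^j x_∞ - a_∞) ∏_{q ≤ m} q^{j/2} 1_{ℤ_q}(q^{-j}x_q - a_q)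
∏_{q > m} 1_{ℤ_q}(x_q)`. -/
def scalFn (j : ℤ) (m : Nat.Primes) (aI : ℤ)
    (a : ∀ q : Nat.Primes, ℚ_[(q : ℕ)]) (x : Adele) : ℂ :=
  (((2 : ℝ) ^ ((j : ℝ) / 2) : ℝ) : ℂ) * indI ((2 : ℝ) ^ j * x.1.1 - aI) *
    ∏' q : Nat.Primes,
      (if (q : ℕ) ≤ (m : ℕ) then
        ((((q : ℕ) : ℝ) ^ ((j : ℝ) / 2) : ℝ) : ℂ) *
          indZ q (((q : ℕ) : ℚ_[(q : ℕ)]) ^ (-j) * x.1.2 q - a q)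
      else indZ q (x.1.2 q))

/-- `V_j^{[m]}`: the closed linear span in `L²(𝔸, μ)` of the shifted scaling functions of
scale `j`, with shifts `a_∞ ∈ ℤ` and `a_q ∈ I_q` for primes `q ≤ m`. -/
def Vjm (μ : Measure Adele) (j : ℤ) (m : Nat.Primes) : Submodule ℂ (Lp ℂ 2 μ) :=
  (Submodule.span ℂ {g : Lp ℂ 2 μ | ∃ (aI : ℤ) (a : ∀ q : Nat.Primes, ℚ_[(q : ℕ)]),
    (∀ q : Nat.Primes, (q : ℕ) ≤ (m : ℕ) → a q ∈ Ip q) ∧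
    (g : Adele → ℂ) =ᵐ[μ] scalFn j m aI a}).topologicalClosure

/-- `V_j`: the closure of the linear span of `⋃_m V_j^{[m]}`. -/
def VjAd (μ : Measure Adele) (j : ℤ) : Submodule ℂ (Lp ℂ 2 μ) :=
  (⨆ m : Nat.Primes, Vjm μ j m).topologicalClosure

/-- The dilation `x ↦ (2x_∞, x_2/2, …, x_m/m, (x_q)_{q>m})` of an adele. -/
def dilMap (m : Nat.Primes) (x : Adele) : Adele :=
  ⟨(2 * x.1.1, fun q =>
      if (q : ℕ) ≤ (m : ℕ) then x.1.2 q / ((q : ℕ) : ℚ_[(q : ℕ)]) else x.1.2 q), by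
    have hev : ∀ᶠ q : Nat.Primes in Filter.cofinite, ¬ ((q : ℕ) ≤ (m : ℕ)) := by
      rw [Filter.eventually_cofinite]
      simpa using primesLE_finite m
    filter_upwards [x.2, hev] with q h1 h2
    simp only [if_neg h2]
    exact h1⟩

/-- The shifted adelic scaling function `x ↦ Φ(x - â)`, for
`â = (a_∞, (a_q)_q) ∈ I_𝔸`. -/
def shiftPhi (aI : ℤ) (a : ∀ q : Nat.Primes, ℚ_[(q : ℕ)]) (x : Adele) : ℂ :=
  indI (x.1.1 - aI) * ∏' q : Nat.Primes, indZ q (x.1.2 q - a q)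

/-- The adelic set of shifts `I_𝔸`: `â_∞ ∈ ℤ`, `â_q ∈ I_q` for all `q`, and `â_q = 0` for
all but finitely many `q`. -/
def IAdele : Type :=
  ℤ × {a : ∀ q : Nat.Primes, ℚ_[(q : ℕ)] //
        (∀ q : Nat.Primes, a q ∈ Ip q) ∧ {q : Nat.Primes | a q ≠ 0}.Finite}

/-- The ball `{x : q^{-j} x - a ∈ ℤ_q}`. -/
def pball (q : ℕ) [Fact q.Prime] (j : ℤ) (a : ℚ_[q]) : Set ℚ_[q] :=
  {x | ‖(q : ℚ_[q]) ^ (-j) * x - a‖ ≤ 1}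

theorem norm_sub_le_one {q : ℕ} [Fact q.Prime] {x y : ℚ_[q]} (hx : ‖x‖ ≤ 1) (hy : ‖y‖ ≤ 1) :
    ‖x - y‖ ≤ 1 := by
  have := Padic.nonarchimedean x (-y)
  rw [← sub_eq_add_neg, norm_neg] at this
  exact this.trans (max_le hx hy)

theorem norm_add_le_one {q : ℕ} [Fact q.Prime] {x y : ℚ_[q]} (hx : ‖x‖ ≤ 1) (hy : ‖y‖ ≤ 1) :
    ‖x + y‖ ≤ 1 :=
  (Padic.nonarchimedean x y).trans (max_le hx hy)

theorem isClosed_pball (q : ℕ) [Fact q.Prime] (j : ℤ) (a : ℚ_[q]) : IsClosed (pball q j a) := by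
  unfold pball
  exact isClosed_le (by fun_prop) continuous_const

theorem measurableSet_pball (q : ℕ) [Fact q.Prime] (j : ℤ) (a : ℚ_[q]) :
    MeasurableSet (pball q j a) := (isClosed_pball q j a).measurableSet

theorem Ip_countable (q : ℕ) [Fact q.Prime] : (Ip q).Countable := by
  refine (Set.countable_range (fun z : ℕ × ℕ => (z.1 : ℚ_[q]) / (q : ℚ_[q]) ^ z.2)).mono ?_
  rintro a ⟨m, n, -, rfl⟩
  exact ⟨(m, n), rfl⟩

theorem zero_mem_Ip (q : ℕ) [Fact q.Prime] : (0 : ℚ_[q]) ∈ Ip q := ⟨0, 0, by simp, by simp⟩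

theorem exists_Ip (q : ℕ) [hq : Fact q.Prime] (y : ℚ_[q]) : ∃ a ∈ Ip q, ‖y - a‖ ≤ 1 := by
  have hq1 : (1 : ℝ) < q := by exact_mod_cast hq.out.one_lt
  have hq0 : (q : ℚ_[q]) ≠ 0 := by exact_mod_cast hq.out.ne_zero
  obtain ⟨n, hn⟩ := pow_unbounded_of_one_lt ‖y‖ hq1
  have hz : ‖(q : ℚ_[q]) ^ n * y‖ ≤ 1 := by
    rw [norm_mul, norm_pow, Padic.norm_p, inv_pow]
    rw [inv_mul_le_iff₀ (by positivity)]
    linarith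
  let z : ℤ_[q] := ⟨(q : ℚ_[q]) ^ n * y, hz⟩
  refine ⟨(z.appr n : ℚ_[q]) / (q : ℚ_[q]) ^ n, ⟨z.appr n, n, PadicInt.appr_lt z n, rfl⟩, ?_⟩
  have h := (PadicInt.norm_le_pow_iff_mem_span_pow _ n).2 (PadicInt.appr_spec n z)
  rw [PadicInt.norm_def] at h
  push_cast at h
  have e : y - (z.appr n : ℚ_[q]) / (q : ℚ_[q]) ^ n
      = ((q : ℚ_[q]) ^ n * y - z.appr n) * ((q : ℚ_[q]) ^ n)⁻¹ := by
    field_simp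
  rw [e, norm_mul, norm_inv, norm_pow, Padic.norm_p, inv_pow, inv_inv]
  have h' : ‖(q : ℚ_[q]) ^ n * y - z.appr n‖ ≤ (q : ℝ) ^ (-(n : ℤ)) := h
  rw [zpow_neg, zpow_natCast] at h'
  calc _ ≤ ((q : ℝ) ^ n)⁻¹ * (q : ℝ) ^ n := by gcongr
    _ = 1 := inv_mul_cancel₀ (by positivity)

theorem Ip_unique (q : ℕ) [hq : Fact q.Prime] {a b : ℚ_[q]} (ha : a ∈ Ip q) (hb : b ∈ Ip q)
    (hab : ‖a - b‖ ≤ 1) : a = b := by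
  have hq0 : (q : ℚ_[q]) ≠ 0 := by exact_mod_cast hq.out.ne_zero
  obtain ⟨m, n, hm, rfl⟩ := ha
  obtain ⟨k, l, hk, rfl⟩ := hb
  have e : (m : ℚ_[q]) / (q : ℚ_[q]) ^ n - (k : ℚ_[q]) / (q : ℚ_[q]) ^ l
      = (((m * q ^ l : ℕ) : ℤ) - ((k * q ^ n : ℕ) : ℤ) : ℤ) * ((q : ℚ_[q]) ^ (n + l))⁻¹ := by
    push_cast
    field_simp
    ring
  have h2 : (q : ℤ) ^ (n + l) ∣ (((m * q ^ l : ℕ) : ℤ) - ((k * q ^ n : ℕ) : ℤ) : ℤ) := by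
    rw [← Padic.norm_int_le_pow_iff_dvd]
    rw [e, norm_mul, norm_inv, norm_pow, Padic.norm_p, inv_pow, inv_inv] at hab
    rw [zpow_neg, zpow_natCast]
    have : (0 : ℝ) < (q : ℝ) ^ (n + l) := by
      have : (0 : ℝ) < q := by exact_mod_cast hq.out.pos
      positivity
    rw [← one_div, le_div_iff₀ this]
    exact hab
  have h3 : (((m * q ^ l : ℕ) : ℤ) - ((k * q ^ n : ℕ) : ℤ) : ℤ) = 0 := by
    apply Int.eq_zero_of_abs_lt_dvd h2
    have hm' : m * q ^ l < q ^ (n + l) := by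
      rw [pow_add]; exact Nat.mul_lt_mul_of_pos_right hm (pow_pos hq.out.pos _)
    have hk' : k * q ^ n < q ^ (n + l) := by
      rw [pow_add, mul_comm (q ^ n)]; exact Nat.mul_lt_mul_of_pos_right hk (pow_pos hq.out.pos _)
    rw [abs_lt]
    have hm2 : ((m * q ^ l : ℕ) : ℤ) < (q : ℤ) ^ (n + l) := by exact_mod_cast hm'
    have hk2 : ((k * q ^ n : ℕ) : ℤ) < (q : ℤ) ^ (n + l) := by exact_mod_cast hk'
    constructor <;> linarith [Int.natCast_nonneg (m * q ^ l), Int.natCast_nonneg (k * q ^ n)]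
  rw [← sub_eq_zero, e, h3]
  simp

theorem measure_pball_zero_step (q : ℕ) [hq : Fact q.Prime] (ν : Measure ℚ_[q])
    [ν.IsAddHaarMeasure] (j : ℤ) (a : ℚ_[q]) : ν (pball q j a) = ν (pball q j 0) := by
  have hq0 : (q : ℚ_[q]) ≠ 0 := by exact_mod_cast hq.out.ne_zero
  rw [← measure_preimage_add ν ((q : ℚ_[q]) ^ j * a) (pball q j a)]
  congr 1
  ext x
  simp only [pball, Set.mem_preimage, Set.mem_ofPred_eq]
  rw [mul_add, ← mul_assoc, ← zpow_add₀ hq0]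
  simp

theorem pball_split (q : ℕ) [hq : Fact q.Prime] (j : ℤ) :
    pball q j 0 = ⋃ i ∈ Finset.range q, pball q (j + 1) ((i : ℚ_[q]) / q) := by
  have hq0 : (q : ℚ_[q]) ≠ 0 := by exact_mod_cast hq.out.ne_zero
  have hqp : (0 : ℝ) < q := by exact_mod_cast hq.out.pos
  have key : ∀ (x : ℚ_[q]) (i : ℕ), x ∈ pball q (j + 1) ((i : ℚ_[q]) / q) ↔
      ‖(q : ℚ_[q]) ^ (-j) * x - i‖ ≤ (q : ℝ)⁻¹ := by
    intro x i
    have e : (q : ℚ_[q]) ^ (-(j + 1)) * x - (i : ℚ_[q]) / q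
        = ((q : ℚ_[q]) ^ (-j) * x - i) * (q : ℚ_[q])⁻¹ := by
      rw [neg_add, zpow_add₀ hq0, zpow_neg_one]
      field_simp
    simp only [pball, Set.mem_ofPred_eq]
    rw [e, norm_mul, norm_inv, Padic.norm_p, inv_inv, ← one_div, le_div_iff₀ hqp]
  ext x
  simp only [Set.mem_iUnion, key]
  constructor
  · intro hx
    have hx' : ‖(q : ℚ_[q]) ^ (-j) * x‖ ≤ 1 := by simpa [pball] using hx
    obtain ⟨n, hn, h⟩ := PadicInt.exists_mem_range (⟨_, hx'⟩ : ℤ_[q])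
    refine ⟨n, Finset.mem_range.2 hn, ?_⟩
    rw [PadicInt.maximalIdeal_eq_span_p, ← pow_one (q : ℤ_[q]),
      ← PadicInt.norm_le_pow_iff_mem_span_pow, PadicInt.norm_def] at h
    have h' : ‖(q : ℚ_[q]) ^ (-j) * x - n‖ ≤ (q : ℝ) ^ (-((1 : ℕ) : ℤ)) := by
      have e : ((⟨_, hx'⟩ - (n : ℤ_[q]) : ℤ_[q]) : ℚ_[q]) = (q : ℚ_[q]) ^ (-j) * x - n := by
        push_cast
        rfl
      rw [← e]; exact h
    simpa using h'
  · rintro ⟨n, hn, h⟩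
    have h1 : ‖(q : ℚ_[q]) ^ (-j) * x - n‖ ≤ 1 :=
      h.trans (inv_le_one_of_one_le₀ (by exact_mod_cast hq.out.one_le))
    have h2 : ‖(n : ℚ_[q])‖ ≤ 1 := by simpa using Padic.norm_int_le_one (p := q) (n : ℤ)
    have := norm_add_le_one h1 h2
    simpa [pball] using this

theorem measure_pball_succ (q : ℕ) [hq : Fact q.Prime] (ν : Measure ℚ_[q])
    [ν.IsAddHaarMeasure] (j : ℤ) : ν (pball q j 0) = q * ν (pball q (j + 1) 0) := by
  rw [pball_split q j, measure_biUnion_finset]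
  · simp only [measure_pball_zero_step q ν (j + 1)]
    simp
  · intro i hi k hk hik
    refine Set.disjoint_left.2 fun x hx hy => hik ?_
    have h : ‖(i : ℚ_[q]) / q - (k : ℚ_[q]) / q‖ ≤ 1 := by
      have := norm_sub_le_one (show ‖_‖ ≤ 1 from hy) (show ‖_‖ ≤ 1 from hx)
      simpa using this
    have hq0 : (q : ℚ_[q]) ≠ 0 := by exact_mod_cast hq.out.ne_zero
    have := Ip_unique q (a := (i : ℚ_[q]) / q) (b := (k : ℚ_[q]) / q)
      ⟨i, 1, by simpa using hi, by simp⟩ ⟨k, 1, by simpa using hk, by simp⟩ h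
    field_simp at this
    exact_mod_cast this
  · intro i _
    exact measurableSet_pball _ _ _

theorem measure_pball (q : ℕ) [hq : Fact q.Prime] (ν : Measure ℚ_[q])
    [ν.IsAddHaarMeasure] (hν : ν {x : ℚ_[q] | ‖x‖ ≤ 1} = 1) (j : ℤ) (a : ℚ_[q]) :
    ν (pball q j a) = (q : ENNReal) ^ (-j) := by
  have hq0 : (q : ENNReal) ≠ 0 := by exact_mod_cast hq.out.ne_zero
  have hqt : (q : ENNReal) ≠ ⊤ := ENNReal.natCast_ne_top q
  rw [measure_pball_zero_step]
  induction j using Int.induction_on with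
  | zero => simpa [pball] using hν
  | succ i ih =>
    rw [measure_pball_succ] at ih
    rw [neg_add, ENNReal.zpow_add hq0 hqt, ← ih, zpow_neg_one, mul_comm, ← mul_assoc,
      ENNReal.inv_mul_cancel hq0 hqt, one_mul]
  | pred i ih =>
    rw [measure_pball_succ, sub_add_cancel, ih, neg_sub, sub_neg_eq_add, neg_neg,
      ENNReal.zpow_add hq0 hqt, zpow_one]

/-- Boxes in the adeles. -/
def gbox (E : Set ℝ) (B : ∀ q : Nat.Primes, Set ℚ_[(q : ℕ)]) : Set Adele :=
  {x | x.1.1 ∈ E ∧ ∀ q, x.1.2 q ∈ B q}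

/-- The finite components of the cells. -/
def cellB (j : ℤ) (m : Nat.Primes) (a : ∀ q : Nat.Primes, ℚ_[(q : ℕ)]) (q : Nat.Primes) :
    Set ℚ_[(q : ℕ)] :=
  if (q : ℕ) ≤ (m : ℕ) then pball q j (a q) else {x | ‖x‖ ≤ 1}

/-- The real component of the cells. -/
def rcell (j : ℤ) (k : ℤ) : Set ℝ := {t | ⌊(2 : ℝ) ^ j * t⌋ = k}

/-- The cells of level `(j, m)`. -/
def cell (j : ℤ) (m : Nat.Primes) (k : ℤ) (a : ∀ q : Nat.Primes, ℚ_[(q : ℕ)]) : Set Adele :=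
  gbox (rcell j k) (cellB j m a)

theorem measurable_adele_real : Measurable (fun x : Adele => x.1.1) := by
  have h : Measurable (fun x : Adele => x.1) := measurable_subtype_coe
  exact measurable_fst.comp h

theorem measurable_adele_padic (q : Nat.Primes) : Measurable (fun x : Adele => x.1.2 q) := by
  have h : Measurable (fun x : Adele => x.1) := measurable_subtype_coe
  exact (measurable_pi_apply q).comp (measurable_snd.comp h)

theorem measurableSet_gbox {E : Set ℝ} {B : ∀ q : Nat.Primes, Set ℚ_[(q : ℕ)]}
    (hE : MeasurableSet E) (hB : ∀ q, MeasurableSet (B q)) : MeasurableSet (gbox E B) := by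
  have : gbox E B = (fun x : Adele => x.1.1) ⁻¹' E ∩ ⋂ q, (fun x : Adele => x.1.2 q) ⁻¹' (B q) := by
    ext x; simp [gbox]
  rw [this]
  exact (measurable_adele_real hE).inter
    (MeasurableSet.iInter fun q => measurable_adele_padic q (hB q))

theorem measurableSet_unitball (q : Nat.Primes) :
    MeasurableSet {x : ℚ_[(q : ℕ)] | ‖x‖ ≤ 1} := by
  have := measurableSet_pball q 0 0
  simpa [pball] using this

theorem measurableSet_cellB (j : ℤ) (m : Nat.Primes) (a : ∀ q : Nat.Primes, ℚ_[(q : ℕ)])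
    (q : Nat.Primes) : MeasurableSet (cellB j m a q) := by
  unfold cellB
  split_ifs
  · exact measurableSet_pball _ _ _
  · exact measurableSet_unitball q

theorem rcell_eq (j k : ℤ) : rcell j k = Set.Ico ((2 : ℝ) ^ (-j) * k) ((2 : ℝ) ^ (-j) * (k + 1)) := by
  ext t
  have h2 : (0 : ℝ) < (2 : ℝ) ^ j := by positivity
  simp only [rcell, Set.mem_ofPred_eq, Int.floor_eq_iff, Set.mem_Ico, zpow_neg]
  rw [inv_mul_le_iff₀ h2, lt_inv_mul_iff₀ h2]

theorem measurableSet_rcell (j k : ℤ) : MeasurableSet (rcell j k) := by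
  rw [rcell_eq]; exact measurableSet_Ico

theorem volume_rcell (j k : ℤ) : volume (rcell j k) = (2 : ENNReal) ^ (-j) := by
  rw [rcell_eq, Real.volume_Ico, ← mul_sub]
  have : ((k : ℝ) + 1 - k) = 1 := by ring
  have h2 : (2 : ℝ) ^ (-j) = (((2 : NNReal) ^ (-j) : NNReal) : ℝ) := by push_cast; rfl
  rw [this, mul_one, h2, ENNReal.ofReal_coe_nnreal, ENNReal.coe_zpow (by norm_num)]
  simp

theorem measurableSet_cell (j : ℤ) (m : Nat.Primes) (k : ℤ)
    (a : ∀ q : Nat.Primes, ℚ_[(q : ℕ)]) : MeasurableSet (cell j m k a) :=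
  measurableSet_gbox (measurableSet_rcell j k) (measurableSet_cellB j m a)

/-- The finite set of primes `≤ m`. -/
def primeS (m : Nat.Primes) : Finset Nat.Primes := (primesLE_finite m).toFinset

theorem mem_primeS {m q : Nat.Primes} : q ∈ primeS m ↔ (q : ℕ) ≤ (m : ℕ) := by
  simp [primeS]

theorem exists_prime_bound (S : Set Nat.Primes) (hS : S.Finite) :
    ∃ m : Nat.Primes, ∀ q ∈ S, (q : ℕ) ≤ (m : ℕ) := by
  obtain ⟨N, hN⟩ := (hS.image (fun q : Nat.Primes => (q : ℕ))).bddAbove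
  obtain ⟨p, hp, hpp⟩ := Nat.exists_infinite_primes N
  exact ⟨⟨p, hpp⟩, fun q hq => (hN ⟨q, hq, rfl⟩).trans hp⟩

/-- The defining property of the adelic measure. -/
def IsProdMeas (μp : ∀ q : Nat.Primes, Measure ℚ_[(q : ℕ)]) (μ : Measure Adele) : Prop :=
  ∀ E : Set ℝ, MeasurableSet E → ∀ S : Finset Nat.Primes,
      ∀ B : ∀ q : Nat.Primes, Set ℚ_[(q : ℕ)], (∀ q, MeasurableSet (B q)) →
      μ {x : Adele | x.1.1 ∈ E ∧ (∀ q ∈ S, x.1.2 q ∈ B q) ∧ ∀ q ∉ S, ‖x.1.2 q‖ ≤ 1}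
        = volume E * ∏ q ∈ S, μp q (B q)

theorem measure_gbox {μp : ∀ q : Nat.Primes, Measure ℚ_[(q : ℕ)]} {μ : Measure Adele}
    (hμ : IsProdMeas μp μ) {E : Set ℝ} {B : ∀ q : Nat.Primes, Set ℚ_[(q : ℕ)]}
    (hE : MeasurableSet E) (hB : ∀ q, MeasurableSet (B q)) (S : Finset Nat.Primes)
    (hS : ∀ q ∉ S, B q = {x | ‖x‖ ≤ 1}) :
    μ (gbox E B) = volume E * ∏ q ∈ S, μp q (B q) := by
  rw [← hμ E hE S B hB]
  congr 1
  ext x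
  simp only [gbox, Set.mem_ofPred_eq]
  refine and_congr_right fun _ => ⟨fun h => ⟨fun q _ => h q, fun q hq => ?_⟩, fun h q => ?_⟩
  · have := h q
    rw [hS q hq] at this
    exact this
  · by_cases hq : q ∈ S
    · exact h.1 q hq
    · rw [hS q hq]; exact h.2 q hq

theorem measure_real_null {μp : ∀ q : Nat.Primes, Measure ℚ_[(q : ℕ)]} {μ : Measure Adele}
    (hμ : IsProdMeas μp μ) (c : ℝ) : μ {x : Adele | x.1.1 = c} = 0 := by
  have hsub : {x : Adele | x.1.1 = c} ⊆ ⋃ S : Finset Nat.Primes,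
      {x : Adele | x.1.1 ∈ ({c} : Set ℝ) ∧ (∀ q ∈ S, x.1.2 q ∈ (Set.univ : Set ℚ_[(q : ℕ)])) ∧
        ∀ q ∉ S, ‖x.1.2 q‖ ≤ 1} := by
    intro x hx
    have h := x.2
    rw [Filter.eventually_cofinite] at h
    refine Set.mem_iUnion.2 ⟨h.toFinset, hx, fun _ _ => trivial, fun q hq => ?_⟩
    by_contra hc
    exact hq (by simpa using hc)
  refine measure_mono_null hsub (measure_iUnion_null fun S => ?_)
  have := hμ {c} (measurableSet_singleton c) S (fun q => Set.univ) (fun _ => MeasurableSet.univ)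
  rw [this]
  simp

theorem measure_cell {μp : ∀ q : Nat.Primes, Measure ℚ_[(q : ℕ)]} {μ : Measure Adele}
    (hHaar : ∀ q, (μp q).IsAddHaarMeasure)
    (hnorm : ∀ q, μp q {x : ℚ_[(q : ℕ)] | ‖x‖ ≤ 1} = 1)
    (hμ : IsProdMeas μp μ) (j : ℤ) (m : Nat.Primes) (k : ℤ)
    (a : ∀ q : Nat.Primes, ℚ_[(q : ℕ)]) :
    μ (cell j m k a) = (2 : ENNReal) ^ (-j) * ∏ q ∈ primeS m, ((q : ℕ) : ENNReal) ^ (-j) := by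
  unfold cell
  rw [measure_gbox hμ (measurableSet_rcell j k) (measurableSet_cellB j m a) (primeS m),
    volume_rcell]
  · congr 1
    refine Finset.prod_congr rfl fun q hq => ?_
    have := hHaar q
    rw [cellB, if_pos (mem_primeS.1 hq), measure_pball _ _ (hnorm q)]
  · intro q hq
    rw [cellB, if_neg (fun h => hq (mem_primeS.2 h))]

theorem prime_zpow_ne_top (q : ℕ) (hq : q.Prime) (j : ℤ) : (q : ENNReal) ^ j ≠ ⊤ :=
  ENNReal.zpow_ne_top (by exact_mod_cast hq.ne_zero) (ENNReal.natCast_ne_top q) j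

theorem measure_cell_ne_top {μp : ∀ q : Nat.Primes, Measure ℚ_[(q : ℕ)]} {μ : Measure Adele}
    (hHaar : ∀ q, (μp q).IsAddHaarMeasure)
    (hnorm : ∀ q, μp q {x : ℚ_[(q : ℕ)] | ‖x‖ ≤ 1} = 1)
    (hμ : IsProdMeas μp μ) (j : ℤ) (m : Nat.Primes) (k : ℤ)
    (a : ∀ q : Nat.Primes, ℚ_[(q : ℕ)]) :
    μ (cell j m k a) ≠ ⊤ := by
  rw [measure_cell hHaar hnorm hμ]
  refine ENNReal.mul_ne_top ?_ (ENNReal.prod_ne_top fun q _ => prime_zpow_ne_top _ q.2 _)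
  exact_mod_cast prime_zpow_ne_top 2 Nat.prime_two (-j)

/-- Countable index set of the cells of level `(j, m)`. -/
abbrev CI (m : Nat.Primes) : Type :=
  ℤ × (∀ q : {q : Nat.Primes // (q : ℕ) ≤ (m : ℕ)}, Ip (q.1 : ℕ))

instance instCountableCI (m : Nat.Primes) : Countable (CI m) := by
  have : Finite {q : Nat.Primes // (q : ℕ) ≤ (m : ℕ)} := primesLE_finite m
  have : ∀ q : {q : Nat.Primes // (q : ℕ) ≤ (m : ℕ)}, Countable (Ip (q.1 : ℕ)) :=
    fun q => (Ip_countable _).to_subtype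
  infer_instance

/-- Extension by zero of a finite family of shifts. -/
def extA {m : Nat.Primes} (i : CI m) (q : Nat.Primes) : ℚ_[(q : ℕ)] :=
  if h : (q : ℕ) ≤ (m : ℕ) then (i.2 ⟨q, h⟩ : ℚ_[(q : ℕ)]) else 0

theorem extA_mem {m : Nat.Primes} (i : CI m) (q : Nat.Primes) : extA i q ∈ Ip q := by
  unfold extA
  split_ifs with h
  · exact (i.2 ⟨q, h⟩).2
  · exact zero_mem_Ip _

/-- The cell attached to an index. -/
def icell (j : ℤ) (m : Nat.Primes) (i : CI m) : Set Adele := cell j m i.1 (extA i)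

/-- The adeles integral above `m`. -/
def XM (m : Nat.Primes) : Set Adele := {x | ∀ q : Nat.Primes, ¬ (q : ℕ) ≤ (m : ℕ) → ‖x.1.2 q‖ ≤ 1}

/-- Saturated sets of level `(j, m)`. -/
def Sat (j : ℤ) (m : Nat.Primes) (A : Set Adele) : Prop :=
  A ⊆ XM m ∧ ∀ x ∈ A, ∀ y ∈ XM m, ⌊(2 : ℝ) ^ j * x.1.1⌋ = ⌊(2 : ℝ) ^ j * y.1.1⌋ →
    (∀ q : Nat.Primes, (q : ℕ) ≤ (m : ℕ) →
      ‖((q : ℕ) : ℚ_[(q : ℕ)]) ^ (-j) * (y.1.2 q - x.1.2 q)‖ ≤ 1) → y ∈ A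

theorem mem_cell {j : ℤ} {m : Nat.Primes} {k : ℤ} {a : ∀ q : Nat.Primes, ℚ_[(q : ℕ)]}
    {x : Adele} : x ∈ cell j m k a ↔ ⌊(2 : ℝ) ^ j * x.1.1⌋ = k ∧
      (∀ q : Nat.Primes, (q : ℕ) ≤ (m : ℕ) →
        ‖((q : ℕ) : ℚ_[(q : ℕ)]) ^ (-j) * x.1.2 q - a q‖ ≤ 1) ∧ x ∈ XM m := by
  simp only [cell, gbox, rcell, Set.mem_ofPred_eq, XM]
  refine and_congr_right fun _ => ⟨fun h => ⟨fun q hq => ?_, fun q hq => ?_⟩, fun h q => ?_⟩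
  · have := h q
    rwa [cellB, if_pos hq] at this
  · have := h q
    rwa [cellB, if_neg hq] at this
  · rw [cellB]
    split_ifs with hq
    · exact h.1 q hq
    · exact h.2 q hq

theorem sat_cell (j : ℤ) (m : Nat.Primes) (k : ℤ) (a : ∀ q : Nat.Primes, ℚ_[(q : ℕ)]) :
    Sat j m (cell j m k a) := by
  refine ⟨fun x hx => (mem_cell.1 hx).2.2, fun x hx y hy h1 h2 => ?_⟩
  rw [mem_cell] at hx ⊢
  refine ⟨h1 ▸ hx.1, fun q hq => ?_, hy⟩
  have := norm_add_le_one (h2 q hq) (hx.2.1 q hq)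
  rw [mul_sub] at this
  simpa using this

theorem floor_two (s t : ℝ) (h : ⌊2 * s⌋ = ⌊2 * t⌋) : ⌊s⌋ = ⌊t⌋ := by
  have e : ∀ s : ℝ, ⌊s⌋ = ⌊2 * s⌋ / 2 := by
    intro s
    have := Int.floor_div_natCast (2 * s) 2
    simp only [Nat.cast_ofNat] at this
    rw [← this]
    congr 1
    ring
  rw [e s, e t, h]

theorem Sat.succ {j : ℤ} {m : Nat.Primes} {A : Set Adele} (h : Sat j m A) : Sat (j + 1) m A := by
  refine ⟨h.1, fun x hx y hy h1 h2 => h.2 x hx y hy ?_ fun q hq => ?_⟩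
  · apply floor_two
    rw [zpow_add₀ (by norm_num), zpow_one] at h1
    convert h1 using 2 <;> ring
  · have hq0 : ((q : ℕ) : ℚ_[(q : ℕ)]) ≠ 0 := by exact_mod_cast q.2.ne_zero
    have := h2 q hq
    have e : ((q : ℕ) : ℚ_[(q : ℕ)]) ^ (-j) * (y.1.2 q - x.1.2 q)
        = (q : ℕ) * (((q : ℕ) : ℚ_[(q : ℕ)]) ^ (-(j + 1)) * (y.1.2 q - x.1.2 q)) := by
      rw [neg_add, zpow_add₀ hq0, zpow_neg_one]
      field_simp
    rw [e, norm_mul]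
    exact mul_le_one₀ (by simpa using Padic.norm_int_le_one (p := q) ((q : ℕ) : ℤ))
      (norm_nonneg _) this

theorem Sat.mono {j j' : ℤ} (hj : j ≤ j') {m : Nat.Primes} {A : Set Adele} (h : Sat j m A) :
    Sat j' m A := by
  induction j', hj using Int.leInduction with
  | base => exact h
  | succ n hn ih => exact ih.succ

theorem Sat.mono_m {j : ℤ} (hj : 0 ≤ j) {m m' : Nat.Primes} (hm : (m : ℕ) ≤ m') {A : Set Adele}
    (h : Sat j m A) : Sat j m' A := by
  refine ⟨fun x hx q hq => h.1 hx q (fun hc => hq (hc.trans hm)), fun x hx y hy h1 h2 => ?_⟩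
  refine h.2 x hx y (fun q hq => ?_) h1 fun q hq => h2 q (hq.trans hm)
  by_cases hqm : (q : ℕ) ≤ m'
  · have h3 := h2 q hqm
    have hx1 := h.1 hx q hq
    have hq0 : ((q : ℕ) : ℚ_[(q : ℕ)]) ≠ 0 := by exact_mod_cast q.2.ne_zero
    have e : y.1.2 q = (((q : ℕ) : ℚ_[(q : ℕ)]) ^ j *
        (((q : ℕ) : ℚ_[(q : ℕ)]) ^ (-j) * (y.1.2 q - x.1.2 q))) + x.1.2 q := by
      rw [← mul_assoc, ← zpow_add₀ hq0]
      simp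
    rw [e]
    refine norm_add_le_one ?_ hx1
    rw [norm_mul]
    refine mul_le_one₀ ?_ (norm_nonneg _) h3
    lift j to ℕ using hj
    rw [zpow_natCast, norm_pow]
    exact pow_le_one₀ (norm_nonneg _)
      (by simpa using Padic.norm_int_le_one (p := q) ((q : ℕ) : ℤ))
  · exact hy q hqm

theorem Sat.inter {j : ℤ} {m : Nat.Primes} {A B : Set Adele} (hA : Sat j m A) (hB : Sat j m B) :
    Sat j m (A ∩ B) :=
  ⟨fun _ hx => hA.1 hx.1, fun x hx y hy h1 h2 =>
    ⟨hA.2 x hx.1 y hy h1 h2, hB.2 x hx.2 y hy h1 h2⟩⟩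

theorem exists_icell {j : ℤ} {m : Nat.Primes} {x : Adele} (hx : x ∈ XM m) :
    ∃ i : CI m, x ∈ icell j m i := by
  choose a ha hxa using fun q : Nat.Primes =>
    exists_Ip q (((q : ℕ) : ℚ_[(q : ℕ)]) ^ (-j) * x.1.2 q)
  refine ⟨(⌊(2 : ℝ) ^ j * x.1.1⌋, fun q => ⟨a q.1, ha q.1⟩), ?_⟩
  rw [icell, mem_cell]
  refine ⟨rfl, fun q hq => ?_, hx⟩
  simpa [extA, hq] using hxa q

theorem cell_disjoint {j : ℤ} {m : Nat.Primes} {k k' : ℤ} {a a' : ∀ q : Nat.Primes, ℚ_[(q : ℕ)]}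
    (ha : ∀ q : Nat.Primes, (q : ℕ) ≤ (m : ℕ) → a q ∈ Ip q)
    (ha' : ∀ q : Nat.Primes, (q : ℕ) ≤ (m : ℕ) → a' q ∈ Ip q)
    {x : Adele} (hx : x ∈ cell j m k a) (hx' : x ∈ cell j m k' a') :
    k = k' ∧ ∀ q : Nat.Primes, (q : ℕ) ≤ (m : ℕ) → a q = a' q := by
  rw [mem_cell] at hx hx'
  refine ⟨hx.1 ▸ hx'.1, fun q hq => Ip_unique q (ha q hq) (ha' q hq) ?_⟩
  have := norm_sub_le_one (hx'.2.1 q hq) (hx.2.1 q hq)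
  simpa using this

theorem icell_disjoint (j : ℤ) (m : Nat.Primes) :
    Pairwise (Function.onFun Disjoint (icell j m)) := by
  intro i i' hii
  refine Set.disjoint_left.2 fun x hx hx' => hii ?_
  obtain ⟨h1, h2⟩ := cell_disjoint (fun q _ => extA_mem i q) (fun q _ => extA_mem i' q) hx hx'
  refine Prod.ext h1 (funext fun q => Subtype.ext ?_)
  simpa [extA, q.2] using h2 q.1 q.2

theorem Sat.inter_icell {j : ℤ} {m : Nat.Primes} {A : Set Adele} (h : Sat j m A) (i : CI m) :
    A ∩ icell j m i = ∅ ∨ A ∩ icell j m i = icell j m i := by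
  rcases (A ∩ icell j m i).eq_empty_or_nonempty with h0 | ⟨x, hxA, hxi⟩
  · exact Or.inl h0
  · refine Or.inr (Set.inter_eq_right.2 fun y hy => ?_)
    rw [icell, mem_cell] at hxi hy
    refine h.2 x hxA y hy.2.2 (hxi.1.trans hy.1.symm) fun q hq => ?_
    have := norm_sub_le_one (hy.2.1 q hq) (hxi.2.1 q hq)
    rw [mul_sub]
    simpa using this

theorem Sat.eq_iUnion {j : ℤ} {m : Nat.Primes} {A : Set Adele} (h : Sat j m A) :
    A = ⋃ i : CI m, A ∩ icell j m i := by
  ext x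
  simp only [Set.mem_iUnion, Set.mem_inter_iff]
  exact ⟨fun hx => (exists_icell (j := j) (h.1 hx)).imp fun i hi => ⟨hx, hi⟩, fun ⟨_, hx⟩ => hx.1⟩

theorem measurableSet_icell (j : ℤ) (m : Nat.Primes) (i : CI m) : MeasurableSet (icell j m i) :=
  measurableSet_cell _ _ _ _

theorem Sat.measurableSet_inter {j : ℤ} {m : Nat.Primes} {A : Set Adele} (h : Sat j m A)
    (i : CI m) : MeasurableSet (A ∩ icell j m i) := by
  rcases h.inter_icell i with h0 | h0 <;> rw [h0]
  · exact MeasurableSet.empty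
  · exact measurableSet_icell _ _ _

theorem Sat.measurableSet {j : ℤ} {m : Nat.Primes} {A : Set Adele} (h : Sat j m A) :
    MeasurableSet A := by
  rw [h.eq_iUnion]
  exact MeasurableSet.iUnion h.measurableSet_inter

/-- The generating π-system. -/
def piC : Set (Set Adele) := {A | ∃ (j : ℕ) (m : Nat.Primes), Sat j m A}

theorem Sat.lift {j j' : ℕ} {m m' : Nat.Primes} {A : Set Adele} (h : Sat j m A) (hj : j ≤ j')
    (hm : (m : ℕ) ≤ m') : Sat j' m' A :=
  (h.mono (by exact_mod_cast hj)).mono_m (by positivity) hm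

theorem exists_ge_primes (m m' : Nat.Primes) : ∃ M : Nat.Primes, (m : ℕ) ≤ M ∧ (m' : ℕ) ≤ M := by
  rcases le_total (m : ℕ) (m' : ℕ) with h | h
  · exact ⟨m', h, le_rfl⟩
  · exact ⟨m, le_rfl, h⟩

theorem isPiSystem_piC : IsPiSystem piC := by
  rintro A ⟨j, m, hA⟩ B ⟨j', m', hB⟩ -
  obtain ⟨M, h1, h2⟩ := exists_ge_primes m m'
  exact ⟨max j j', M, (hA.lift (le_max_left _ _) h1).inter (hB.lift (le_max_right _ _) h2)⟩

theorem iUnion_XM : ⋃ m : Nat.Primes, XM m = Set.univ := by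
  refine Set.eq_univ_of_forall fun x => ?_
  have h := x.2
  rw [Filter.eventually_cofinite] at h
  obtain ⟨m, hm⟩ := exists_prime_bound _ h
  refine Set.mem_iUnion.2 ⟨m, fun q hq => ?_⟩
  by_contra hc
  exact hq (hm q hc)

theorem real_level_sat (U : Set ℝ) (n : ℕ) (m : Nat.Primes) :
    Sat n m {x : Adele | x ∈ XM m ∧
      ∀ t : ℝ, ⌊(2 : ℝ) ^ (n : ℤ) * t⌋ = ⌊(2 : ℝ) ^ (n : ℤ) * x.1.1⌋ → t ∈ U} :=
  ⟨fun _ hx => hx.1, fun _ hx _ hy h1 _ => ⟨hy, fun t ht => hx.2 t (ht.trans h1.symm)⟩⟩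

theorem padic_level_sat (q : Nat.Primes) (U : Set ℚ_[(q : ℕ)]) (n : ℕ) (m : Nat.Primes) :
    Sat n m {x : Adele | (q : ℕ) ≤ m ∧ x ∈ XM m ∧
      ∀ t : ℚ_[(q : ℕ)], ‖((q : ℕ) : ℚ_[(q : ℕ)]) ^ (-(n : ℤ)) * (t - x.1.2 q)‖ ≤ 1 → t ∈ U} := by
  refine ⟨fun _ hx => hx.2.1, fun x hx y hy _ h2 => ⟨hx.1, hy, fun t ht => hx.2.2 t ?_⟩⟩
  have := norm_add_le_one ht (h2 q hx.1)
  rwa [← mul_add, sub_add_sub_cancel] at this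

theorem generateFrom_piC :
    (inferInstance : MeasurableSpace Adele) = MeasurableSpace.generateFrom piC := by
  apply le_antisymm
  · have h1 : @Measurable Adele ℝ (MeasurableSpace.generateFrom piC) _ (fun x => x.1.1) := by
      refine @measurable_of_isOpen _ _ _ _ _ (MeasurableSpace.generateFrom piC) _ fun U hU => ?_
      have e : (fun x : Adele => x.1.1) ⁻¹' U = ⋃ m : Nat.Primes, ⋃ n : ℕ,
          {x : Adele | x ∈ XM m ∧
            ∀ t : ℝ, ⌊(2 : ℝ) ^ (n : ℤ) * t⌋ = ⌊(2 : ℝ) ^ (n : ℤ) * x.1.1⌋ → t ∈ U} := by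
        ext x
        simp only [Set.mem_preimage, Set.mem_iUnion]
        constructor
        · intro hx
          have hxm : x ∈ ⋃ m : Nat.Primes, XM m := by rw [iUnion_XM]; trivial
          obtain ⟨m, hm⟩ := Set.mem_iUnion.1 hxm
          obtain ⟨ε, hε, hb⟩ := Metric.isOpen_iff.1 hU _ hx
          obtain ⟨n, hn⟩ := exists_pow_lt_of_lt_one hε (show (1 / 2 : ℝ) < 1 by norm_num)
          refine ⟨m, n, hm, fun t ht => hb ?_⟩
          have h3 := Int.abs_sub_lt_one_of_floor_eq_floor ht
          rw [← mul_sub, abs_mul, zpow_natCast, abs_of_pos (by positivity)] at h3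
          rw [Metric.mem_ball, Real.dist_eq]
          refine lt_trans ?_ hn
          rw [one_div, inv_pow, ← one_div, lt_div_iff₀ (by positivity)]
          linarith
        · rintro ⟨m, n, _, h⟩
          exact h _ rfl
      rw [e]
      refine MeasurableSet.iUnion fun m => MeasurableSet.iUnion fun n => ?_
      exact MeasurableSpace.measurableSet_generateFrom ⟨n, m, real_level_sat U n m⟩
    have h2 : ∀ q : Nat.Primes, @Measurable Adele ℚ_[(q : ℕ)] (MeasurableSpace.generateFrom piC) _
        (fun x => x.1.2 q) := by
      intro q
      refine @measurable_of_isOpen _ _ _ _ _ (MeasurableSpace.generateFrom piC) _ fun U hU => ?_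
      have e : (fun x : Adele => x.1.2 q) ⁻¹' U = ⋃ m : Nat.Primes, ⋃ n : ℕ,
          {x : Adele | (q : ℕ) ≤ m ∧ x ∈ XM m ∧
            ∀ t : ℚ_[(q : ℕ)],
              ‖((q : ℕ) : ℚ_[(q : ℕ)]) ^ (-(n : ℤ)) * (t - x.1.2 q)‖ ≤ 1 → t ∈ U} := by
        ext x
        simp only [Set.mem_preimage, Set.mem_iUnion]
        constructor
        · intro hx
          have hxm : x ∈ ⋃ m : Nat.Primes, XM m := by rw [iUnion_XM]; trivial
          obtain ⟨m, hm⟩ := Set.mem_iUnion.1 hxm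
          obtain ⟨M, hM1, hM2⟩ := exists_ge_primes q m
          obtain ⟨ε, hε, hb⟩ := Metric.isOpen_iff.1 hU _ hx
          have hq1 : (1 : ℝ) < (q : ℕ) := by exact_mod_cast q.2.one_lt
          obtain ⟨n, hn⟩ := exists_pow_lt_of_lt_one hε (inv_lt_one_of_one_lt₀ hq1)
          refine ⟨M, n, hM1, fun r hr => hm r (fun hc => hr (hc.trans hM2)), fun t ht => hb ?_⟩
          rw [Metric.mem_ball, dist_eq_norm]
          refine lt_of_le_of_lt ?_ hn
          rw [norm_mul, Padic.norm_p_zpow, neg_neg, zpow_natCast] at ht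
          rw [inv_pow, ← one_div, le_div_iff₀ (by positivity)]
          linarith
        · rintro ⟨m, n, _, _, h⟩
          exact h _ (by simp)
      rw [e]
      refine MeasurableSet.iUnion fun m => MeasurableSet.iUnion fun n => ?_
      exact MeasurableSpace.measurableSet_generateFrom ⟨n, m, padic_level_sat q U n m⟩
    have h3 : @Measurable Adele (ℝ × (∀ q : Nat.Primes, ℚ_[(q : ℕ)]))
        (MeasurableSpace.generateFrom piC) _ (fun x => x.1) :=
      Measurable.prodMk (f := fun x : Adele => x.1.1)
        (g := fun x : Adele => x.1.2) h1
        (@measurable_pi_lambda _ _ _ (MeasurableSpace.generateFrom piC) _ _ h2)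
    exact measurable_iff_comap_le.1 h3
  · refine MeasurableSpace.generateFrom_le ?_
    rintro A ⟨j, m, hA⟩
    exact hA.measurableSet

/-- The normalizing constant of the scaling functions. -/
def cst (j : ℤ) (m : Nat.Primes) : ℝ :=
  (2 : ℝ) ^ ((j : ℝ) / 2) * ∏ q ∈ primeS m, ((q : ℕ) : ℝ) ^ ((j : ℝ) / 2)

theorem cst_pos (j : ℤ) (m : Nat.Primes) : 0 < cst j m := by
  refine mul_pos (by positivity) (Finset.prod_pos fun q _ => ?_)
  have : (0 : ℝ) < (q : ℕ) := by exact_mod_cast q.2.pos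
  positivity

theorem indZ_pos {q : ℕ} [Fact q.Prime] {x : ℚ_[q]} (h : ‖x‖ ≤ 1) : indZ q x = 1 := if_pos h

theorem indZ_neg {q : ℕ} [Fact q.Prime] {x : ℚ_[q]} (h : ¬ ‖x‖ ≤ 1) : indZ q x = 0 := if_neg h

theorem tprod_scal (j : ℤ) (m : Nat.Primes) (a : ∀ q : Nat.Primes, ℚ_[(q : ℕ)]) (x : Adele) :
    (∏' q : Nat.Primes,
      (if (q : ℕ) ≤ (m : ℕ) then
        ((((q : ℕ) : ℝ) ^ ((j : ℝ) / 2) : ℝ) : ℂ) *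
          indZ q (((q : ℕ) : ℚ_[(q : ℕ)]) ^ (-j) * x.1.2 q - a q)
      else indZ q (x.1.2 q)))
    = ((∏ q ∈ primeS m, ((q : ℕ) : ℝ) ^ ((j : ℝ) / 2) : ℝ) : ℂ) *
      (if ∀ q, x.1.2 q ∈ cellB j m a q then 1 else 0) := by
  by_cases h : ∀ q, x.1.2 q ∈ cellB j m a q
  · rw [if_pos h, mul_one, tprod_eq_prod (s := primeS m)]
    · push_cast
      refine Finset.prod_congr rfl fun q hq => ?_
      have h1 := h q
      rw [mem_primeS] at hq
      rw [cellB, if_pos hq] at h1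
      rw [if_pos hq, indZ_pos h1, mul_one]
    · intro q hq
      have h1 := h q
      rw [mem_primeS] at hq
      rw [cellB, if_neg hq] at h1
      rw [if_neg hq, indZ_pos h1]
  · rw [if_neg h, mul_zero]
    push Not at h
    obtain ⟨q0, h0⟩ := h
    have hx := x.2
    rw [Filter.eventually_cofinite] at hx
    rw [tprod_eq_prod (s := insert q0 (primeS m ∪ hx.toFinset))]
    · refine Finset.prod_eq_zero (Finset.mem_insert_self _ _) ?_
      rw [cellB] at h0
      split_ifs at h0 ⊢ with hq
      · rw [indZ_neg h0, mul_zero]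
      · rw [indZ_neg h0]
    · intro q hq
      simp only [Finset.mem_insert, Finset.mem_union, not_or, mem_primeS, Set.Finite.mem_toFinset,
        Set.mem_ofPred_eq, not_not] at hq
      rw [if_neg hq.2.1, indZ_pos hq.2.2]

/-- The standing assumptions on the measures. -/
structure GoodM (μp : ∀ q : Nat.Primes, Measure ℚ_[(q : ℕ)]) (μ : Measure Adele) : Prop where
  haar : ∀ q, (μp q).IsAddHaarMeasure
  norm : ∀ q, μp q {x : ℚ_[(q : ℕ)] | ‖x‖ ≤ 1} = 1
  prod : IsProdMeas μp μ

theorem scalFn_ae {μp : ∀ q : Nat.Primes, Measure ℚ_[(q : ℕ)]} {μ : Measure Adele}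
    (h : GoodM μp μ) (j : ℤ) (m : Nat.Primes) (k : ℤ) (a : ∀ q : Nat.Primes, ℚ_[(q : ℕ)]) :
    scalFn j m k a =ᵐ[μ] fun x => (cst j m : ℂ) * (cell j m k a).indicator (fun _ => (1 : ℂ)) x := by
  have hn : ∀ᵐ x : Adele ∂μ, x.1.1 ≠ (2 : ℝ) ^ (-j) * (k + 1) := by
    rw [ae_iff]
    simpa using measure_real_null h.prod ((2 : ℝ) ^ (-j) * (k + 1))
  filter_upwards [hn] with x hx
  have h2 : (0 : ℝ) < (2 : ℝ) ^ j := by positivity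
  have e : ((2 : ℝ) ^ j * x.1.1 - k ∈ Set.Icc (0 : ℝ) 1) ↔ x.1.1 ∈ rcell j k := by
    rw [rcell, Set.mem_ofPred_eq, Int.floor_eq_iff, Set.mem_Icc]
    constructor
    · rintro ⟨ha, hb⟩
      refine ⟨by linarith, lt_of_le_of_ne (by linarith) fun hc => hx ?_⟩
      rw [← hc, zpow_neg, inv_mul_cancel_left₀ h2.ne']
    · rintro ⟨ha, hb⟩
      exact ⟨by linarith, by linarith⟩
  unfold scalFn
  rw [tprod_scal, indI]
  simp only [e]
  by_cases h1 : x.1.1 ∈ rcell j k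
  · by_cases h3 : ∀ q, x.1.2 q ∈ cellB j m a q
    · have : x ∈ cell j m k a := ⟨h1, h3⟩
      rw [if_pos h1, if_pos h3, Set.indicator_of_mem this, cst]
      push_cast
      ring
    · have : x ∉ cell j m k a := fun hc => h3 hc.2
      rw [if_neg h3, Set.indicator_of_notMem this]
      simp
  · have : x ∉ cell j m k a := fun hc => h1 hc.1
    rw [if_neg h1, Set.indicator_of_notMem this]
    simp

/-- The normalized indicator of a cell in `L²`. -/
def ucell {μp : ∀ q : Nat.Primes, Measure ℚ_[(q : ℕ)]} {μ : Measure Adele}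
    (h : GoodM μp μ) (j : ℤ) (m : Nat.Primes) (k : ℤ) (a : ∀ q : Nat.Primes, ℚ_[(q : ℕ)]) :
    Lp ℂ 2 μ :=
  indicatorConstLp 2 (measurableSet_cell j m k a)
    (measure_cell_ne_top h.haar h.norm h.prod j m k a) (1 : ℂ)

section
variable {μp : ∀ q : Nat.Primes, Measure ℚ_[(q : ℕ)]} {μ : Measure Adele}

theorem ucell_smul_ae (h : GoodM μp μ) (j : ℤ) (m : Nat.Primes) (k : ℤ)
    (a : ∀ q : Nat.Primes, ℚ_[(q : ℕ)]) :
    (((cst j m : ℂ) • ucell h j m k a : Lp ℂ 2 μ) : Adele → ℂ) =ᵐ[μ] scalFn j m k a := by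
  have h1 := Lp.coeFn_smul (cst j m : ℂ) (ucell h j m k a)
  have h2 : (ucell h j m k a : Adele → ℂ) =ᵐ[μ] _ := indicatorConstLp_coeFn
  filter_upwards [h1, h2, scalFn_ae h j m k a] with x h1 h2 h3
  rw [h1, h3, Pi.smul_apply, h2, smul_eq_mul]

theorem ucell_mem (h : GoodM μp μ) (j : ℤ) (m : Nat.Primes) (k : ℤ)
    (a : ∀ q : Nat.Primes, ℚ_[(q : ℕ)])
    (ha : ∀ q : Nat.Primes, (q : ℕ) ≤ (m : ℕ) → a q ∈ Ip q) : ucell h j m k a ∈ Vjm μ j m := by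
  have hc : (cst j m : ℂ) ≠ 0 := by exact_mod_cast (cst_pos j m).ne'
  have h1 : (cst j m : ℂ) • ucell h j m k a ∈ Vjm μ j m :=
    Submodule.le_topologicalClosure _ (Submodule.subset_span ⟨k, a, ha, ucell_smul_ae h j m k a⟩)
  have := (Vjm μ j m).smul_mem (cst j m : ℂ)⁻¹ h1
  rwa [smul_smul, inv_mul_cancel₀ hc, one_smul] at this

theorem Vjm_le (h : GoodM μp μ) (j : ℤ) (m : Nat.Primes) (K : Submodule ℂ (Lp ℂ 2 μ))
    (hK : IsClosed (K : Set (Lp ℂ 2 μ)))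
    (hu : ∀ (k : ℤ) (a : ∀ q : Nat.Primes, ℚ_[(q : ℕ)]),
      (∀ q : Nat.Primes, (q : ℕ) ≤ (m : ℕ) → a q ∈ Ip q) → ucell h j m k a ∈ K) :
    Vjm μ j m ≤ K := by
  refine Submodule.topologicalClosure_minimal _ (Submodule.span_le.2 ?_) hK
  rintro g ⟨k, a, ha, hg⟩
  have : g = (cst j m : ℂ) • ucell h j m k a := Lp.ext (hg.trans (ucell_smul_ae h j m k a).symm)
  rw [this]
  exact K.smul_mem _ (hu k a ha)

theorem Vjm_le_VjAd (j : ℤ) (m : Nat.Primes) : Vjm μ j m ≤ VjAd μ j :=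
  (le_iSup (fun m => Vjm μ j m) m).trans (Submodule.le_topologicalClosure _)

theorem VjAd_le (j : ℤ) (K : Submodule ℂ (Lp ℂ 2 μ))
    (hK : IsClosed (K : Set (Lp ℂ 2 μ))) (hu : ∀ m, Vjm μ j m ≤ K) : VjAd μ j ≤ K :=
  Submodule.topologicalClosure_minimal _ (iSup_le hu) hK

theorem Sat.integral_zero {j : ℤ} {m : Nat.Primes} {A : Set Adele}
    (hA : Sat j m A) (hfin : μ A ≠ ⊤) (f : Lp ℂ 2 μ)
    (hf : ∀ i : CI m, ∫ x in icell j m i, f x ∂μ = 0) : ∫ x in A, f x ∂μ = 0 := by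
  have hint : IntegrableOn f A μ :=
    integrableOn_Lp_of_measure_ne_top f (by norm_num) hfin
  have hs := hasSum_integral_iUnion (μ := μ) (f := (f : Adele → ℂ)) (s := fun i : CI m => A ∩ icell j m i)
    hA.measurableSet_inter
    (fun i i' hii => (icell_disjoint j m hii).mono Set.inter_subset_right Set.inter_subset_right)
    (by rw [← hA.eq_iUnion]; exact hint)
  rw [← hA.eq_iUnion] at hs
  have h0 : ∀ i : CI m, ∫ x in A ∩ icell j m i, f x ∂μ = 0 := by
    intro i
    rcases hA.inter_icell i with h0 | h0 <;> rw [h0]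
    · simp
    · exact hf i
  simp only [h0] at hs
  exact hs.unique hasSum_zero

theorem Sat.mem_Vjm (h : GoodM μp μ) {j : ℤ} {m : Nat.Primes} {A : Set Adele}
    (hA : Sat j m A) (hfin : μ A ≠ ⊤) :
    indicatorConstLp 2 hA.measurableSet hfin (1 : ℂ) ∈ Vjm μ j m := by
  have hcl : (Vjm μ j m)ᗮᗮ = Vjm μ j m := by
    rw [Submodule.orthogonal_orthogonal_eq_closure]
    exact IsClosed.submodule_topologicalClosure_eq (Submodule.isClosed_topologicalClosure _)
  rw [← hcl, Submodule.mem_orthogonal']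
  intro f hf
  rw [L2.inner_indicatorConstLp_one]
  refine hA.integral_zero hfin f fun i => ?_
  have := (Submodule.mem_orthogonal _ _).1 hf _ (ucell_mem h j m i.1 (extA i) fun q _ => extA_mem i q)
  rwa [ucell, L2.inner_indicatorConstLp_one] at this

theorem partA (h : GoodM μp μ) (j : ℤ) : VjAd μ j ≤ VjAd μ (j + 1) := by
  refine VjAd_le j _ (Submodule.isClosed_topologicalClosure _) fun m => ?_
  refine le_trans ?_ (Vjm_le_VjAd (j + 1) m)
  refine Vjm_le h j m _ (Submodule.isClosed_topologicalClosure _) fun k a _ => ?_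
  exact (sat_cell j m k a).succ.mem_Vjm h (measure_cell_ne_top h.haar h.norm h.prod j m k a)

/-- An `L²` function whose integral over all small cells vanishes is zero. -/
theorem eq_zero_of_cells (h : GoodM μp μ) (f : Lp ℂ 2 μ)
    (hf : ∀ (j : ℕ) (m : Nat.Primes) (i : CI m), ∫ x in icell j m i, f x ∂μ = 0) : f = 0 := by
  have hsat : ∀ A ∈ piC, μ A ≠ ⊤ → ∫ x in A, f x ∂μ = 0 := by
    rintro A ⟨j, m, hA⟩ hfin
    exact hA.integral_zero hfin f (hf j m)
  have key : ∀ (m : Nat.Primes) (i : CI m), ∀ᵐ x ∂(μ.restrict (icell (0 : ℕ) m i)), f x = 0 := by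
    intro m i
    set D := icell (0 : ℕ) m i with hD
    have hDC : D ∈ piC := ⟨0, m, sat_cell _ _ _ _⟩
    have hDm : MeasurableSet D := measurableSet_icell _ _ _
    have hDf : μ D ≠ ⊤ := measure_cell_ne_top h.haar h.norm h.prod _ _ _ _
    have hint : IntegrableOn f D μ := integrableOn_Lp_of_measure_ne_top f (by norm_num) hDf
    have hzero : ∀ s, MeasurableSet s → ∫ x in s ∩ D, f x ∂μ = 0 := by
      intro s hs
      induction s, hs using MeasurableSpace.induction_on_inter generateFrom_piC isPiSystem_piC with
      | empty => simp
      | basic t ht =>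
        rcases (t ∩ D).eq_empty_or_nonempty with h0 | h0
        · rw [h0]; simp
        · exact hsat _ (isPiSystem_piC t ht D hDC h0)
            (ne_top_of_le_ne_top hDf (measure_mono Set.inter_subset_right))
      | compl t ht ih =>
        have h1 : tᶜ ∩ D = D \ (t ∩ D) := by ext x; simp; tauto
        rw [h1, setIntegral_sdiff (ht.inter hDm) hint Set.inter_subset_right, ih,
          hsat D hDC hDf, sub_zero]
      | iUnion g hd hm ih =>
        rw [Set.iUnion_inter]
        have hs := hasSum_integral_iUnion (μ := μ) (f := (f : Adele → ℂ)) (s := fun n => g n ∩ D)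
          (fun n => (hm n).inter hDm)
          (fun a b hab => (hd hab).mono Set.inter_subset_left Set.inter_subset_left)
          (hint.mono_set (Set.iUnion_subset fun n => Set.inter_subset_right))
        simp only [ih] at hs
        exact hs.unique hasSum_zero
    refine Integrable.ae_eq_zero_of_forall_setIntegral_eq_zero hint fun s hs _ => ?_
    rw [Measure.restrict_restrict hs]
    exact hzero s hs
  refine Lp.ext ?_
  have hall : ∀ᵐ x ∂μ, ∀ (m : Nat.Primes) (i : CI m), x ∈ icell (0 : ℕ) m i → f x = 0 := by
    rw [ae_all_iff]
    intro m
    rw [ae_all_iff]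
    intro i
    exact (ae_restrict_iff' (measurableSet_icell _ _ _)).1 (key m i)
  filter_upwards [hall, Lp.coeFn_zero ℂ 2 μ] with x hx h0
  rw [h0]
  have hxm : x ∈ ⋃ m : Nat.Primes, XM m := by rw [iUnion_XM]; trivial
  obtain ⟨m, hm⟩ := Set.mem_iUnion.1 hxm
  obtain ⟨i, hi⟩ := exists_icell (j := (0 : ℕ)) hm
  exact hx m i hi

theorem VjAd_mono (h : GoodM μp μ) : Monotone (fun j : ℤ => VjAd μ j) :=
  monotone_int_of_le_succ (partA h)

theorem partB (h : GoodM μp μ) : Dense (⋃ j : ℤ, (VjAd μ j : Set (Lp ℂ 2 μ))) := by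
  rw [← Submodule.coe_iSup_of_directed _ (VjAd_mono h).directed_le,
    Submodule.dense_iff_topologicalClosure_eq_top,
    Submodule.topologicalClosure_eq_top_iff, Submodule.eq_bot_iff]
  intro f hf
  refine eq_zero_of_cells h f fun j m i => ?_
  have hm : ucell h j m i.1 (extA i) ∈ ⨆ j : ℤ, VjAd μ j :=
    (le_iSup (fun j : ℤ => VjAd μ j) j) (Vjm_le_VjAd j m
      (ucell_mem h j m i.1 (extA i) fun q _ => extA_mem i q))
  have := (Submodule.mem_orthogonal _ _).1 hf _ hm
  rwa [ucell, L2.inner_indicatorConstLp_one] at this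

end

section
variable {μp : ∀ q : Nat.Primes, Measure ℚ_[(q : ℕ)]} {μ : Measure Adele}

theorem shiftPhi_eq (k : ℤ) (a : ∀ q : Nat.Primes, ℚ_[(q : ℕ)]) (m : Nat.Primes)
    (ha : ∀ q : Nat.Primes, ¬ (q : ℕ) ≤ (m : ℕ) → a q = 0) : shiftPhi k a = scalFn 0 m k a := by
  funext x
  unfold shiftPhi scalFn
  have : ∀ q : Nat.Primes, (if (q : ℕ) ≤ (m : ℕ) then
        ((((q : ℕ) : ℝ) ^ (((0 : ℤ) : ℝ) / 2) : ℝ) : ℂ) *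
          indZ q (((q : ℕ) : ℚ_[(q : ℕ)]) ^ (-(0 : ℤ)) * x.1.2 q - a q)
      else indZ q (x.1.2 q)) = indZ q (x.1.2 q - a q) := by
    intro q
    split_ifs with hq
    · simp
    · rw [ha q hq, sub_zero]
  simp only [this]
  simp

theorem cst_zero (m : Nat.Primes) : cst 0 m = 1 := by simp [cst]

theorem shiftPhi_ae (h : GoodM μp μ) (k : ℤ) (a : ∀ q : Nat.Primes, ℚ_[(q : ℕ)]) (m : Nat.Primes)
    (ha : ∀ q : Nat.Primes, ¬ (q : ℕ) ≤ (m : ℕ) → a q = 0) :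
    shiftPhi k a =ᵐ[μ] (cell 0 m k a).indicator (fun _ => (1 : ℂ)) := by
  rw [shiftPhi_eq k a m ha]
  filter_upwards [scalFn_ae h 0 m k a] with x hx
  rw [hx, cst_zero]
  simp

theorem exists_support_bound (t : IAdele) : ∃ m : Nat.Primes,
    ∀ q : Nat.Primes, ¬ (q : ℕ) ≤ (m : ℕ) → t.2.1 q = 0 := by
  obtain ⟨m, hm⟩ := exists_prime_bound _ t.2.2.2
  refine ⟨m, fun q hq => ?_⟩
  by_contra hc
  exact hq (hm q hc)

theorem partE1 (h : GoodM μp μ) (t s : IAdele) :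
    ∫ x, shiftPhi t.1 t.2.1 x * (starRingEnd ℂ) (shiftPhi s.1 s.2.1 x) ∂μ
      = if t = s then 1 else 0 := by
  obtain ⟨m1, h1⟩ := exists_support_bound t
  obtain ⟨m2, h2⟩ := exists_support_bound s
  obtain ⟨m, hm1, hm2⟩ := exists_ge_primes m1 m2
  have h1' : ∀ q : Nat.Primes, ¬ (q : ℕ) ≤ (m : ℕ) → t.2.1 q = 0 :=
    fun q hq => h1 q fun hc => hq (hc.trans hm1)
  have h2' : ∀ q : Nat.Primes, ¬ (q : ℕ) ≤ (m : ℕ) → s.2.1 q = 0 :=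
    fun q hq => h2 q fun hc => hq (hc.trans hm2)
  have e : (fun x => shiftPhi t.1 t.2.1 x * (starRingEnd ℂ) (shiftPhi s.1 s.2.1 x)) =ᵐ[μ]
      (cell 0 m t.1 t.2.1 ∩ cell 0 m s.1 s.2.1).indicator (fun _ => (1 : ℂ)) := by
    filter_upwards [shiftPhi_ae h t.1 t.2.1 m h1', shiftPhi_ae h s.1 s.2.1 m h2'] with x hx hy
    rw [hx, hy]
    by_cases ha : x ∈ cell 0 m t.1 t.2.1 <;> by_cases hb : x ∈ cell 0 m s.1 s.2.1 <;>
      simp [ha, hb]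
  rw [integral_congr_ae e, integral_indicator_const _
    ((measurableSet_cell _ _ _ _).inter (measurableSet_cell _ _ _ _))]
  split_ifs with hts
  · subst hts
    rw [Set.inter_self, Measure.real, measure_cell h.haar h.norm h.prod]
    simp
  · have : cell 0 m t.1 t.2.1 ∩ cell 0 m s.1 s.2.1 = ∅ := by
      by_contra hne
      obtain ⟨x, hx, hy⟩ := Set.nonempty_iff_ne_empty.2 hne
      obtain ⟨h3, h4⟩ := cell_disjoint (fun q _ => t.2.2.1 q) (fun q _ => s.2.2.1 q) hx hy
      refine hts (Prod.ext h3 (Subtype.ext (funext fun q => ?_)))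
      by_cases hq : (q : ℕ) ≤ m
      · exact h4 q hq
      · rw [h1' q hq, h2' q hq]
    rw [this]
    simp

theorem partE2 (h : GoodM μp μ) (t : IAdele) : ∃ g : Lp ℂ 2 μ, g ∈ VjAd μ 0 ∧
    (g : Adele → ℂ) =ᵐ[μ] shiftPhi t.1 t.2.1 := by
  obtain ⟨m, hm⟩ := exists_support_bound t
  refine ⟨ucell h 0 m t.1 t.2.1, Vjm_le_VjAd 0 m (ucell_mem h 0 m _ _ fun q _ => t.2.2.1 q), ?_⟩
  exact indicatorConstLp_coeFn.trans (shiftPhi_ae h t.1 t.2.1 m hm).symm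

theorem partE3 (h : GoodM μp μ) (f : Lp ℂ 2 μ) (hf : f ∈ VjAd μ 0)
    (hz : ∀ t : IAdele,
      ∫ x, (f : Adele → ℂ) x * (starRingEnd ℂ) (shiftPhi t.1 t.2.1 x) ∂μ = 0) : f = 0 := by
  have hle : VjAd μ 0 ≤ (Submodule.span ℂ {f})ᗮ := by
    refine VjAd_le 0 _ (Submodule.isClosed_orthogonal _) fun m => ?_
    refine Vjm_le h 0 m _ (Submodule.isClosed_orthogonal _) fun k a ha => ?_
    rw [Submodule.mem_orthogonal_singleton_iff_inner_left, ucell, L2.inner_indicatorConstLp_one]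
    let b : ∀ q : Nat.Primes, ℚ_[(q : ℕ)] := fun q => if (q : ℕ) ≤ (m : ℕ) then a q else 0
    have hb : ∀ q : Nat.Primes, b q ∈ Ip q := by
      intro q
      by_cases hq : (q : ℕ) ≤ m
      · simpa [b, hq] using ha q hq
      · simpa [b, hq] using zero_mem_Ip q
    have hb0 : ∀ q : Nat.Primes, ¬ (q : ℕ) ≤ (m : ℕ) → b q = 0 := fun q hq => if_neg hq
    have hfin : {q : Nat.Primes | b q ≠ 0}.Finite :=
      (primesLE_finite m).subset fun q hq => by
        by_contra hc
        exact hq (hb0 q hc)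
    have hcell : cell 0 m k a = cell 0 m k b := by
      ext x
      rw [mem_cell, mem_cell]
      refine and_congr_right fun _ => and_congr_left fun _ => forall_congr' fun q =>
        forall_congr' fun hq => ?_
      simp [b, hq]
    have := hz (k, ⟨b, hb, hfin⟩)
    have e : (fun x => (f : Adele → ℂ) x * (starRingEnd ℂ) (shiftPhi k b x)) =ᵐ[μ]
        (cell 0 m k b).indicator f := by
      filter_upwards [shiftPhi_ae h k b m hb0] with x hx
      rw [hx]
      by_cases hc : x ∈ cell 0 m k b <;> simp [hc]
    rw [hcell, ← integral_indicator (measurableSet_cell _ _ _ _), ← integral_congr_ae e]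
    exact this
  have := hle hf
  rw [Submodule.mem_orthogonal_singleton_iff_inner_left] at this
  exact inner_self_eq_zero.1 this

theorem measure_gbox_update (h : GoodM μp μ) {E : Set ℝ} {B : ∀ q : Nat.Primes, Set ℚ_[(q : ℕ)]}
    (hE : MeasurableSet E) (hB : ∀ q, MeasurableSet (B q)) (T : Finset Nat.Primes)
    (hT : ∀ q ∉ T, B q = {x | ‖x‖ ≤ 1}) (p : Nat.Primes) (hp : p ∈ T) (P Q : Set ℚ_[(p : ℕ)])
    (hP : MeasurableSet P) (hQ : MeasurableSet Q) :
    μ (gbox E (Function.update B p P)) * μp p Q = μ (gbox E (Function.update B p Q)) * μp p P := by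
  have key : ∀ R : Set ℚ_[(p : ℕ)], MeasurableSet R → μ (gbox E (Function.update B p R))
      = volume E * (μp p R * ∏ q ∈ T.erase p, μp q (B q)) := by
    intro R hR
    rw [measure_gbox h.prod hE ?_ T ?_, ← Finset.mul_prod_erase T _ hp, Function.update_self]
    · congr 2
      refine Finset.prod_congr rfl fun q hq => ?_
      rw [Function.update_of_ne (Finset.ne_of_mem_erase hq)]
    · intro q
      by_cases hq : q = p
      · subst hq; simpa using hR
      · rw [Function.update_of_ne hq]; exact hB q
    · intro q hq
      have hqp : q ≠ p := by
        rintro rfl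
        exact hq hp
      rw [Function.update_of_ne hqp]
      exact hT q hq
  rw [key P hP, key Q hQ]
  ring

/-- The prime `2`. -/
def pr2 : Nat.Primes := ⟨2, Nat.prime_two⟩

theorem pr2_le (m : Nat.Primes) : (pr2 : ℕ) ≤ (m : ℕ) := m.2.two_le

/-- A cell whose 2-adic component is enlarged to a big ball. -/
def bigcell (n : ℤ) (m : Nat.Primes) (k : ℤ) (a : ∀ q : Nat.Primes, ℚ_[(q : ℕ)]) (K : ℕ) :
    Set Adele :=
  gbox (rcell n k) (Function.update (cellB n m a) pr2 (pball pr2 (-(K : ℤ)) 0))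

theorem gbox_inter (E E' : Set ℝ) (B B' : ∀ q : Nat.Primes, Set ℚ_[(q : ℕ)]) :
    gbox E B ∩ gbox E' B' = gbox (E ∩ E') (fun q => B q ∩ B' q) := by
  ext x
  simp only [gbox, Set.mem_inter_iff, Set.mem_ofPred_eq]
  constructor
  · rintro ⟨⟨h1, h2⟩, h3, h4⟩
    exact ⟨⟨h1, h3⟩, fun q => ⟨h2 q, h4 q⟩⟩
  · rintro ⟨⟨h1, h3⟩, h⟩
    exact ⟨⟨h1, fun q => (h q).1⟩, h3, fun q => (h q).2⟩

theorem measurableSet_update (B : ∀ q : Nat.Primes, Set ℚ_[(q : ℕ)])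
    (hB : ∀ q, MeasurableSet (B q)) (p : Nat.Primes) (P : Set ℚ_[(p : ℕ)]) (hP : MeasurableSet P)
    (q : Nat.Primes) : MeasurableSet (Function.update B p P q) := by
  by_cases hq : q = p
  · subst hq; simpa using hP
  · rw [Function.update_of_ne hq]; exact hB q

theorem measurableSet_bigcell (n : ℤ) (m : Nat.Primes) (k : ℤ)
    (a : ∀ q : Nat.Primes, ℚ_[(q : ℕ)]) (K : ℕ) : MeasurableSet (bigcell n m k a K) :=
  measurableSet_gbox (measurableSet_rcell _ _)
    (measurableSet_update _ (measurableSet_cellB n m a) _ _ (measurableSet_pball _ _ _))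

theorem two_measures (h : GoodM μp μ) (n : ℤ) (a : ℚ_[(pr2 : ℕ)]) :
    μp pr2 (pball pr2 n a) = (2 : ENNReal) ^ (-n) := by
  have := h.haar pr2
  rw [measure_pball _ _ (h.norm pr2)]
  rfl

theorem cellB_two (n : ℤ) (m : Nat.Primes) (a : ∀ q : Nat.Primes, ℚ_[(q : ℕ)]) :
    cellB n m a pr2 = pball pr2 n (a pr2) := by
  rw [cellB, if_pos (pr2_le m)]

theorem cellB_out (n : ℤ) (m : Nat.Primes) (a : ∀ q : Nat.Primes, ℚ_[(q : ℕ)]) (q : Nat.Primes)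
    (hq : q ∉ primeS m) : cellB n m a q = {x | ‖x‖ ≤ 1} := by
  rw [cellB, if_neg (fun hc => hq (mem_primeS.2 hc))]

theorem measure_bigcell (h : GoodM μp μ) (n : ℤ) (m : Nat.Primes) (k : ℤ)
    (a : ∀ q : Nat.Primes, ℚ_[(q : ℕ)]) (K : ℕ) :
    μ (cell n m k a) * (2 : ENNReal) ^ (K : ℤ) = μ (bigcell n m k a K) * (2 : ENNReal) ^ (-n) := by
  have := measure_gbox_update h (measurableSet_rcell n k) (measurableSet_cellB n m a) (primeS m)
    (cellB_out n m a) pr2 (mem_primeS.2 (pr2_le m)) (cellB n m a pr2) (pball pr2 (-(K : ℤ)) 0)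
    (measurableSet_cellB n m a pr2) (measurableSet_pball _ _ _)
  rw [Function.update_eq_self, two_measures h, cellB_two, two_measures h, neg_neg] at this
  exact this

theorem pball_sub (n : ℤ) (a : ℚ_[(pr2 : ℕ)]) : ∃ K0 : ℕ, ∀ K : ℕ, K0 ≤ K →
    0 ≤ K + n ∧ pball pr2 n a ⊆ pball pr2 (-(K : ℤ)) 0 := by
  obtain ⟨N, hN⟩ := pow_unbounded_of_one_lt ‖a‖ (show (1 : ℝ) < 2 by norm_num)
  refine ⟨N + n.natAbs, fun K hK => ?_⟩
  have hK0 : (N : ℤ) ≤ K + n := by omega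
  refine ⟨by omega, fun x hx => ?_⟩
  obtain ⟨M, hM⟩ := Int.eq_ofNat_of_zero_le (show 0 ≤ K + n by omega)
  have hMN : N ≤ M := by omega
  have hx1 : ‖((pr2 : ℕ) : ℚ_[(pr2 : ℕ)]) ^ (-n) * x - a‖ ≤ 1 := hx
  have h20 : ((pr2 : ℕ) : ℚ_[(pr2 : ℕ)]) ≠ 0 := by exact_mod_cast pr2.2.ne_zero
  have hp : ‖((pr2 : ℕ) : ℚ_[(pr2 : ℕ)]) ^ M‖ = ((2 : ℝ) ^ M)⁻¹ := by
    rw [norm_pow, Padic.norm_p, inv_pow]; rfl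
  have e : ((pr2 : ℕ) : ℚ_[(pr2 : ℕ)]) ^ (-(-(K : ℤ))) * x - 0
      = ((pr2 : ℕ) : ℚ_[(pr2 : ℕ)]) ^ M * (((pr2 : ℕ) : ℚ_[(pr2 : ℕ)]) ^ (-n) * x - a)
        + ((pr2 : ℕ) : ℚ_[(pr2 : ℕ)]) ^ M * a := by
    have : (-(-(K : ℤ))) = M + (-n) := by omega
    rw [this, zpow_add₀ h20, zpow_natCast]
    ring
  change ‖_‖ ≤ 1
  rw [e]
  refine norm_add_le_one ?_ ?_
  · rw [norm_mul, hp]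
    exact mul_le_one₀ (inv_le_one_of_one_le₀ (one_le_pow₀ (by norm_num))) (norm_nonneg _) hx1
  · rw [norm_mul, hp, inv_mul_le_iff₀ (by positivity), mul_one]
    exact hN.le.trans (pow_le_pow_right₀ (by norm_num) hMN)

theorem measure_bigcell_inter (h : GoodM μp μ) (n : ℤ) (m : Nat.Primes) (k : ℤ)
    (a : ∀ q : Nat.Primes, ℚ_[(q : ℕ)]) (K : ℕ)
    (hK : pball pr2 n (a pr2) ⊆ pball pr2 (-(K : ℤ)) 0)
    (m' : Nat.Primes) (k' : ℤ) (a' : ∀ q : Nat.Primes, ℚ_[(q : ℕ)]) :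
    μ (cell n m k a ∩ cell (-(K : ℤ)) m' k' a') * (2 : ENNReal) ^ (K : ℤ)
      = μ (bigcell n m k a K ∩ cell (-(K : ℤ)) m' k' a') * (2 : ENNReal) ^ (-n) := by
  set P := pball pr2 (-(K : ℤ)) 0 with hPdef
  have hBm := measurableSet_cellB n m a
  have hBm' := measurableSet_cellB (-(K : ℤ)) m' a'
  by_cases ha : ‖a' pr2‖ ≤ 1
  · have hP' : cellB (-(K : ℤ)) m' a' pr2 = P := by
      rw [cellB_two]
      ext x
      simp only [hPdef, pball, Set.mem_ofPred_eq, sub_zero]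
      constructor
      · intro hx
        simpa using norm_add_le_one hx ha
      · intro hx
        exact norm_sub_le_one hx ha
    have := measure_gbox_update h ((measurableSet_rcell n k).inter (measurableSet_rcell (-(K : ℤ)) k'))
      (B := fun q => cellB n m a q ∩ cellB (-(K : ℤ)) m' a' q)
      (fun q => (hBm q).inter (hBm' q))
      (primeS m ∪ primeS m')
      (fun q hq => by
        rw [Finset.mem_union, not_or] at hq
        rw [cellB_out n m a q hq.1, cellB_out _ m' a' q hq.2, Set.inter_self]) pr2
      (Finset.mem_union_left _ (mem_primeS.2 (pr2_le m))) (cellB n m a pr2) P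
      (hBm pr2) (measurableSet_pball _ _ _)
    rw [hPdef, two_measures h, cellB_two, two_measures h, neg_neg] at this
    rw [cell, cell, bigcell, gbox_inter, gbox_inter]
    convert this using 4
    · funext q
      by_cases hq : q = pr2
      · subst hq
        rw [Function.update_self, hP', cellB_two]
        exact Set.inter_eq_left.2 hK
      · rw [Function.update_of_ne hq]
    · funext q
      by_cases hq : q = pr2
      · subst hq
        rw [Function.update_self, Function.update_self, hP', Set.inter_self]
      · rw [Function.update_of_ne hq, Function.update_of_ne hq]
  · have hdis : ∀ x, x ∈ P → x ∉ cellB (-(K : ℤ)) m' a' pr2 := by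
      intro x hx hx'
      rw [cellB_two] at hx'
      apply ha
      have h1 : ‖((pr2 : ℕ) : ℚ_[(pr2 : ℕ)]) ^ (-(-(K : ℤ))) * x‖ ≤ 1 := by
        simpa [hPdef, pball] using hx
      have := norm_sub_le_one h1 (show ‖_‖ ≤ 1 from hx')
      simpa using this
    have e1 : cell n m k a ∩ cell (-(K : ℤ)) m' k' a' = ∅ := by
      rw [Set.eq_empty_iff_forall_notMem]
      rintro x ⟨h1, h2⟩
      have h3 := h1.2 pr2
      rw [cellB_two] at h3
      exact hdis _ (hK h3) (h2.2 pr2)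
    have e2 : bigcell n m k a K ∩ cell (-(K : ℤ)) m' k' a' = ∅ := by
      rw [Set.eq_empty_iff_forall_notMem]
      rintro x ⟨h1, h2⟩
      have h3 := h1.2 pr2
      rw [Function.update_self] at h3
      exact hdis _ h3 (h2.2 pr2)
    rw [e1, e2]
    simp

theorem toReal_two_zpow (n : ℤ) : ((2 : ENNReal) ^ n).toReal = (2 : ℝ) ^ n := by
  have h : (2 : ENNReal) ^ n = (((2 : NNReal) ^ n : NNReal) : ENNReal) := by
    rw [ENNReal.coe_zpow (by norm_num)]
    rfl
  rw [h, ENNReal.coe_toReal]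
  push_cast
  rfl

theorem partC (h : GoodM μp μ) : (⨅ j : ℤ, VjAd μ j) = ⊥ := by
  rw [Submodule.eq_bot_iff]
  intro f hf
  rw [Submodule.mem_iInf] at hf
  refine eq_zero_of_cells h f fun n m i => ?_
  set D := icell n m i with hD
  have hDm : MeasurableSet D := measurableSet_icell _ _ _
  have hDf : μ D ≠ ⊤ := measure_cell_ne_top h.haar h.norm h.prod _ _ _ _
  obtain ⟨K0, hK0⟩ := pball_sub n (extA i pr2)
  have bound : ∀ K : ℕ, K0 ≤ K →
      ‖∫ x in D, f x ∂μ‖ ^ 2 ≤ (μ.real D * ‖f‖ ^ 2) * (1 / 2) ^ K := by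
    intro K hK
    obtain ⟨-, hsub⟩ := hK0 K hK
    set D' := bigcell n m i.1 (extA i) K with hD'
    have hDm' : MeasurableSet D' := measurableSet_bigcell _ _ _ _ _
    have hmeas : μ D * (2 : ENNReal) ^ (K : ℤ) = μ D' * (2 : ENNReal) ^ (-(n : ℤ)) :=
      measure_bigcell h n m i.1 (extA i) K
    have h2t : ∀ l : ℤ, (2 : ENNReal) ^ l ≠ ⊤ := fun l =>
      ENNReal.zpow_ne_top (by norm_num) (by norm_num) l
    have h20 : ∀ l : ℤ, (2 : ENNReal) ^ l ≠ 0 := fun l =>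
      (ENNReal.zpow_pos (by norm_num) (by norm_num) l).ne'
    have hDf' : μ D' ≠ ⊤ := by
      intro hc
      rw [hc, ENNReal.top_mul (h20 _)] at hmeas
      exact ENNReal.mul_ne_top hDf (h2t _) hmeas
    set r : ℝ := (2 : ℝ) ^ (-(n : ℤ)) * (2 : ℝ) ^ (-(K : ℤ)) with hr
    have hr0 : 0 < r := by positivity
    have conv : ∀ A B : ENNReal, A * (2 : ENNReal) ^ (K : ℤ) = B * (2 : ENNReal) ^ (-(n : ℤ)) →
        A.toReal = r * B.toReal := by
      intro A B hAB
      have h3 := congrArg ENNReal.toReal hAB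
      rw [ENNReal.toReal_mul, ENNReal.toReal_mul, toReal_two_zpow, toReal_two_zpow] at h3
      have h4 : (2 : ℝ) ^ (K : ℤ) * (2 : ℝ) ^ (-(K : ℤ)) = 1 := by
        rw [← zpow_add₀ (by norm_num)]; simp
      calc A.toReal = (A.toReal * (2 : ℝ) ^ (K : ℤ)) * (2 : ℝ) ^ (-(K : ℤ)) := by
            rw [mul_assoc, h4, mul_one]
        _ = r * B.toReal := by rw [h3, hr]; ring
    have hreal : μ.real D = r * μ.real D' := conv _ _ hmeas
    let u : Lp ℂ 2 μ := indicatorConstLp 2 hDm hDf (1 : ℂ)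
    let v : Lp ℂ 2 μ := indicatorConstLp 2 hDm' hDf' (1 : ℂ)
    have hle : VjAd μ (-(K : ℤ)) ≤ (Submodule.span ℂ {u - (r : ℂ) • v})ᗮ := by
      refine VjAd_le _ _ (Submodule.isClosed_orthogonal _) fun m' => ?_
      refine Vjm_le h _ m' _ (Submodule.isClosed_orthogonal _) fun k' a' _ => ?_
      have e1 : inner ℂ (ucell h (-(K : ℤ)) m' k' a') u
          = ((μ.real (cell (-(K : ℤ)) m' k' a' ∩ D) : ℝ) : ℂ) :=
        L2.inner_indicatorConstLp_one_indicatorConstLp_one (measurableSet_cell _ _ _ _) hDm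
          (measure_cell_ne_top h.haar h.norm h.prod _ _ _ _) hDf
      have e2 : inner ℂ (ucell h (-(K : ℤ)) m' k' a') v
          = ((μ.real (cell (-(K : ℤ)) m' k' a' ∩ D') : ℝ) : ℂ) :=
        L2.inner_indicatorConstLp_one_indicatorConstLp_one (measurableSet_cell _ _ _ _) hDm'
          (measure_cell_ne_top h.haar h.norm h.prod _ _ _ _) hDf'
      rw [Submodule.mem_orthogonal_singleton_iff_inner_left, inner_sub_right, inner_smul_right,
        e1, e2, Set.inter_comm, Set.inter_comm _ D']
      have := conv _ _ (measure_bigcell_inter h n m i.1 (extA i) K hsub m' k' a')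
      have h5 : μ.real (D ∩ cell (-(K : ℤ)) m' k' a')
        = r * μ.real (D' ∩ cell (-(K : ℤ)) m' k' a') := this
      rw [h5]
      push_cast
      exact sub_self _
    have hin := hle (hf (-(K : ℤ)))
    rw [Submodule.mem_orthogonal_singleton_iff_inner_right, inner_sub_left, inner_smul_left,
      sub_eq_zero] at hin
    have hu : inner ℂ u f = ∫ x in D, f x ∂μ := L2.inner_indicatorConstLp_one _ _ _
    have hv2 : ‖v‖ ^ 2 = μ.real D' := by
      have h6 : inner ℂ v v = ((μ.real (D' ∩ D') : ℝ) : ℂ) :=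
        L2.inner_indicatorConstLp_one_indicatorConstLp_one hDm' hDm' hDf' hDf'
      rw [inner_self_eq_norm_sq_to_K, Set.inter_self] at h6
      refine Complex.ofReal_injective ?_
      rw [← h6]
      push_cast
      rfl
    have hn : ‖∫ x in D, f x ∂μ‖ ≤ r * (‖v‖ * ‖f‖) := by
      rw [← hu, hin, norm_mul]
      have : ‖(starRingEnd ℂ) (r : ℂ)‖ = r := by simp [abs_of_pos hr0]
      rw [this]
      exact mul_le_mul_of_nonneg_left (norm_inner_le_norm _ _) hr0.le
    calc ‖∫ x in D, f x ∂μ‖ ^ 2 ≤ (r * (‖v‖ * ‖f‖)) ^ 2 := by gcongr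
      _ = r * (r * ‖v‖ ^ 2) * ‖f‖ ^ 2 := by ring
      _ = (μ.real D * ‖f‖ ^ 2) * r := by rw [hv2, ← hreal]; ring
      _ ≤ (μ.real D * ‖f‖ ^ 2) * (1 / 2) ^ K := by
        refine mul_le_mul_of_nonneg_left ?_ (by positivity)
        rw [hr, zpow_neg, zpow_neg, zpow_natCast, zpow_natCast, one_div, inv_pow]
        exact mul_le_of_le_one_left (by positivity)
          (inv_le_one_of_one_le₀ (one_le_pow₀ (by norm_num)))
  have hlim : Filter.Tendsto (fun K : ℕ => (μ.real D * ‖f‖ ^ 2) * (1 / 2 : ℝ) ^ K) Filter.atTop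
      (nhds 0) := by
    have := (tendsto_pow_atTop_nhds_zero_of_lt_one (show (0 : ℝ) ≤ 1 / 2 by norm_num)
      (by norm_num)).const_mul (μ.real D * ‖f‖ ^ 2)
    simpa using this
  have hfin : ‖∫ x in D, f x ∂μ‖ ^ 2 ≤ 0 :=
    ge_of_tendsto hlim (Filter.eventually_atTop.2 ⟨K0, bound⟩)
  have : ‖∫ x in D, f x ∂μ‖ = 0 := by
    have h0 := sq_nonneg ‖∫ x in D, f x ∂μ‖
    exact pow_eq_zero_iff (two_ne_zero) |>.1 (le_antisymm hfin h0)
  exact norm_eq_zero.1 this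
end

theorem measurable_dilMap (m : Nat.Primes) : Measurable (dilMap m) := by
  refine Measurable.subtype_mk ?_
  refine Measurable.prodMk (measurable_adele_real.const_mul 2) (measurable_pi_lambda _ fun q => ?_)
  have hq := measurable_adele_padic q
  split_ifs
  · have hc : Continuous fun y : ℚ_[(q : ℕ)] => y / ((q : ℕ) : ℚ_[(q : ℕ)]) := by fun_prop
    exact hc.measurable.comp hq
  · exact hq

/-- The modulus of the dilation. -/
def dilC (m : Nat.Primes) : ENNReal := 2 * ∏ q ∈ primeS m, ((q : ℕ) : ENNReal)

theorem dil_padic (j : ℤ) (q : Nat.Primes) (y : ℚ_[(q : ℕ)]) :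
    ((q : ℕ) : ℚ_[(q : ℕ)]) ^ (-j) * (y / ((q : ℕ) : ℚ_[(q : ℕ)]))
      = ((q : ℕ) : ℚ_[(q : ℕ)]) ^ (-(j + 1)) * y := by
  have hq0 : ((q : ℕ) : ℚ_[(q : ℕ)]) ≠ 0 := by exact_mod_cast q.2.ne_zero
  rw [neg_add, zpow_add₀ hq0, zpow_neg_one]
  ring

theorem dil_real (j : ℤ) (t : ℝ) : (2 : ℝ) ^ j * (2 * t) = (2 : ℝ) ^ (j + 1) * t := by
  rw [zpow_add₀ (by norm_num), zpow_one]
  ring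

theorem dil_preimage (m M : Nat.Primes) (hm : (m : ℕ) ≤ M) (j k : ℤ)
    (a : ∀ q : Nat.Primes, ℚ_[(q : ℕ)]) :
    dilMap m ⁻¹' (cell j M k a) = gbox (rcell (j + 1) k)
      (fun q => if (q : ℕ) ≤ (m : ℕ) then pball q (j + 1) (a q) else cellB j M a q) := by
  ext x
  change (⌊(2 : ℝ) ^ j * (2 * x.1.1)⌋ = k ∧ ∀ q : Nat.Primes, (if (q : ℕ) ≤ (m : ℕ) then
      x.1.2 q / ((q : ℕ) : ℚ_[(q : ℕ)]) else x.1.2 q) ∈ cellB j M a q) ↔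
    (⌊(2 : ℝ) ^ (j + 1) * x.1.1⌋ = k ∧ ∀ q : Nat.Primes, x.1.2 q ∈
      (if (q : ℕ) ≤ (m : ℕ) then pball q (j + 1) (a q) else cellB j M a q))
  rw [dil_real]
  refine and_congr_right fun _ => forall_congr' fun q => ?_
  by_cases hq : (q : ℕ) ≤ (m : ℕ)
  · rw [if_pos hq, if_pos hq, cellB, if_pos (hq.trans hm)]
    simp only [pball, Set.mem_ofPred_eq, dil_padic]
  · rw [if_neg hq, if_neg hq]

section
variable {μp : ∀ q : Nat.Primes, Measure ℚ_[(q : ℕ)]} {μ : Measure Adele}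

theorem measure_dil_cell (h : GoodM μp μ) (m M : Nat.Primes) (hm : (m : ℕ) ≤ M) (j k : ℤ)
    (a : ∀ q : Nat.Primes, ℚ_[(q : ℕ)]) :
    dilC m * μ (dilMap m ⁻¹' (cell j M k a)) = μ (cell j M k a) := by
  rw [dil_preimage m M hm, measure_cell h.haar h.norm h.prod,
    measure_gbox h.prod (measurableSet_rcell _ _) ?_ (primeS M) ?_, volume_rcell, dilC]
  · have e1 : ∏ q ∈ primeS m, ((q : ℕ) : ENNReal)
        = ∏ q ∈ primeS M, if (q : ℕ) ≤ (m : ℕ) then ((q : ℕ) : ENNReal) else 1 := by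
      rw [← Finset.prod_filter]
      refine Finset.prod_congr ?_ fun _ _ => rfl
      ext q
      simp only [Finset.mem_filter, mem_primeS]
      exact ⟨fun hq => ⟨hq.trans hm, hq⟩, fun hq => hq.2⟩
    have e2 : ∀ b : ℕ, b ≠ 0 → (b : ENNReal) * (b : ENNReal) ^ (-(j + 1)) = (b : ENNReal) ^ (-j) := by
      intro b hb
      have hb0 : (b : ENNReal) ≠ 0 := by exact_mod_cast hb
      have : -j = 1 + -(j + 1) := by ring
      rw [this, ENNReal.zpow_add hb0 (ENNReal.natCast_ne_top b), zpow_one]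
    rw [e1, mul_mul_mul_comm, ← Finset.prod_mul_distrib]
    congr 1
    · exact_mod_cast e2 2 (by norm_num)
    · refine Finset.prod_congr rfl fun q hq => ?_
      rw [mem_primeS] at hq
      by_cases hqm : (q : ℕ) ≤ (m : ℕ)
      · have := h.haar q
        simp only [if_pos hqm]
        rw [measure_pball q (μp q) (h.norm q), e2 _ q.2.ne_zero]
      · have := h.haar q
        simp only [if_neg hqm]
        rw [one_mul, cellB, if_pos hq, measure_pball q (μp q) (h.norm q)]
  · intro q
    split_ifs
    · exact measurableSet_pball _ _ _
    · exact measurableSet_cellB _ _ _ _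
  · intro q hq
    rw [mem_primeS] at hq
    rw [if_neg (fun hc => hq (hc.trans hm)), cellB, if_neg hq]

theorem measure_dil_sat (h : GoodM μp μ) (m M : Nat.Primes) (hm : (m : ℕ) ≤ M) (j : ℤ)
    (A : Set Adele) (hA : Sat j M A) :
    dilC m * μ (dilMap m ⁻¹' A) = μ A := by
  have hd : Pairwise (Function.onFun Disjoint fun i : CI M => A ∩ icell j M i) := by
    intro i i' hii
    exact (icell_disjoint j M hii).mono Set.inter_subset_right Set.inter_subset_right
  have hd' : Pairwise (Function.onFun Disjoint fun i : CI M => dilMap m ⁻¹' (A ∩ icell j M i)) := by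
    intro i i' hii
    exact (hd hii).preimage _
  conv_lhs => rw [hA.eq_iUnion, Set.preimage_iUnion]
  conv_rhs => rw [hA.eq_iUnion]
  rw [measure_iUnion hd hA.measurableSet_inter,
    measure_iUnion hd' (fun i => measurable_dilMap m (hA.measurableSet_inter i)),
    ← ENNReal.tsum_mul_left]
  refine tsum_congr fun i => ?_
  rcases hA.inter_icell i with h0 | h0 <;> rw [h0]
  · simp
  · exact measure_dil_cell h m M hm j _ _

theorem dil_measure (h : GoodM μp μ) (m : Nat.Primes) :
    μ = dilC m • Measure.map (dilMap m) μ := by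
  refine Measure.ext_of_generateFrom_of_cover_subset (S := piC)
    (T := ⋃ m : Nat.Primes, Set.range (icell 0 m)) generateFrom_piC isPiSystem_piC ?_ ?_ ?_ ?_ ?_
  · refine Set.iUnion_subset fun M => ?_
    rintro _ ⟨i, rfl⟩
    exact ⟨0, M, sat_cell _ _ _ _⟩
  · exact Set.countable_iUnion fun M => Set.countable_range _
  · refine Set.eq_univ_of_forall fun x => ?_
    have hx : x ∈ ⋃ m : Nat.Primes, XM m := by rw [iUnion_XM]; trivial
    obtain ⟨M, hM⟩ := Set.mem_iUnion.1 hx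
    obtain ⟨i, hi⟩ := exists_icell (j := 0) hM
    exact ⟨_, Set.mem_iUnion.2 ⟨M, i, rfl⟩, hi⟩
  · intro s hs
    obtain ⟨M, i, rfl⟩ := Set.mem_iUnion.1 hs
    exact measure_cell_ne_top h.haar h.norm h.prod _ _ _ _
  · rintro A ⟨j, M0, hA⟩
    obtain ⟨M, h1, h2⟩ := exists_ge_primes m M0
    have hA' : Sat (j : ℤ) M A := hA.lift le_rfl h2
    rw [Measure.smul_apply, Measure.map_apply (measurable_dilMap m) hA'.measurableSet, smul_eq_mul]
    exact (measure_dil_sat h m M h1 j A hA').symm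

theorem dilC_ne_zero (m : Nat.Primes) : dilC m ≠ 0 := by
  refine mul_ne_zero (by norm_num) (Finset.prod_ne_zero_iff.2 fun q _ => ?_)
  exact_mod_cast q.2.ne_zero

theorem dilC_ne_top (m : Nat.Primes) : dilC m ≠ ⊤ :=
  ENNReal.mul_ne_top (by norm_num) (ENNReal.prod_ne_top fun q _ => ENNReal.natCast_ne_top _)

/-- The normalizing constant of the dilation operator. -/
def dilR (m : Nat.Primes) : ℝ := Real.sqrt (2 * ∏ q ∈ primeS m, ((q : ℕ) : ℝ))

theorem dil_qmp (h : GoodM μp μ) (m : Nat.Primes) :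
    Measure.QuasiMeasurePreserving (dilMap m) μ μ := by
  refine ⟨measurable_dilMap m, ?_⟩
  conv_rhs => rw [dil_measure h m]
  exact Measure.absolutelyContinuous_smul (dilC_ne_zero m)

theorem dil_memLp (h : GoodM μp μ) (m : Nat.Primes) (f : Lp ℂ 2 μ) :
    MemLp (fun x => (f : Adele → ℂ) (dilMap m x)) 2 μ := by
  have hf := Lp.memLp f
  have h1 : MemLp f 2 (Measure.map (dilMap m) μ) := by
    refine hf.of_measure_le_smul (c := (dilC m)⁻¹) (ENNReal.inv_ne_top.2 (dilC_ne_zero m)) ?_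
    conv_rhs => rw [dil_measure h m, smul_smul,
      ENNReal.inv_mul_cancel (dilC_ne_zero m) (dilC_ne_top m), one_smul]
  exact h1.comp_of_map (measurable_dilMap m).aemeasurable

theorem dil_eLpNorm (h : GoodM μp μ) (m : Nat.Primes) (f : Lp ℂ 2 μ) :
    eLpNorm (fun x => (dilR m : ℂ) * (f : Adele → ℂ) (dilMap m x)) 2 μ = eLpNorm f 2 μ := by
  have hf := (Lp.memLp f).1
  have hf' : AEStronglyMeasurable f (Measure.map (dilMap m) μ) := hf.mono_ac (dil_qmp h m).2
  have e1 : eLpNorm (fun x => (dilR m : ℂ) * (f : Adele → ℂ) (dilMap m x)) 2 μ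
      = ‖(dilR m : ℂ)‖ₑ * eLpNorm f 2 (Measure.map (dilMap m) μ) := by
    rw [eLpNorm_map_measure hf' (measurable_dilMap m).aemeasurable]
    exact eLpNorm_const_smul (dilR m : ℂ) _ 2 μ
  rw [e1]
  have e0 : ∀ F : Adele → ℂ, eLpNorm F 2 μ = dilC m ^ (1 / (2 : ENNReal)).toReal *
      eLpNorm F 2 (Measure.map (dilMap m) μ) := by
    intro F
    conv_lhs => rw [dil_measure h m, eLpNorm_smul_measure_of_ne_top (by norm_num), smul_eq_mul]
  rw [e0 f]
  congr 1
  have e2 : dilC m = ENNReal.ofReal (2 * ∏ q ∈ primeS m, ((q : ℕ) : ℝ)) := by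
    rw [ENNReal.ofReal_mul (by norm_num), ENNReal.ofReal_prod_of_nonneg (fun _ _ => by positivity),
      dilC]
    simp
  have h0 : (0 : ℝ) ≤ 2 * ∏ q ∈ primeS m, ((q : ℕ) : ℝ) := by positivity
  rw [e2, ENNReal.ofReal_rpow_of_nonneg h0 (by simp), ← ofReal_norm, Complex.norm_real,
    dilR, Real.norm_of_nonneg (Real.sqrt_nonneg _), Real.sqrt_eq_rpow]
  simp

theorem dil_memLp' (h : GoodM μp μ) (m : Nat.Primes) (f : Lp ℂ 2 μ) :
    MemLp (fun x => (dilR m : ℂ) * (f : Adele → ℂ) (dilMap m x)) 2 μ :=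
  (dil_memLp h m f).const_mul _

/-- The dilation operator. -/
def dilOp (h : GoodM μp μ) (m : Nat.Primes) : Lp ℂ 2 μ →ₗᵢ[ℂ] Lp ℂ 2 μ where
  toFun f := (dil_memLp' h m f).toLp
  map_add' f g := by
    refine Lp.ext ?_
    filter_upwards [(dil_memLp' h m (f + g)).coeFn_toLp, (dil_memLp' h m f).coeFn_toLp,
      (dil_memLp' h m g).coeFn_toLp, Lp.coeFn_add (dil_memLp' h m f).toLp (dil_memLp' h m g).toLp,
      (dil_qmp h m).ae (Lp.coeFn_add f g)] with x h1 h2 h3 h4 h5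
    rw [h1, h4, Pi.add_apply, h2, h3, h5, Pi.add_apply, mul_add]
  map_smul' c f := by
    refine Lp.ext ?_
    filter_upwards [(dil_memLp' h m (c • f)).coeFn_toLp, (dil_memLp' h m f).coeFn_toLp,
      Lp.coeFn_smul c (dil_memLp' h m f).toLp,
      (dil_qmp h m).ae (Lp.coeFn_smul c f)] with x h1 h2 h4 h5
    rw [h1, RingHom.id_apply, h4, Pi.smul_apply, h2, h5, Pi.smul_apply, smul_eq_mul, smul_eq_mul]
    ring
  norm_map' f := by
    change ‖(dil_memLp' h m f).toLp‖ = ‖f‖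
    rw [Lp.norm_toLp, dil_eLpNorm h m f, Lp.norm_def]

theorem dilOp_coe (h : GoodM μp μ) (m : Nat.Primes) (f : Lp ℂ 2 μ) :
    (dilOp h m f : Adele → ℂ) =ᵐ[μ] fun x => (dilR m : ℂ) * (f : Adele → ℂ) (dilMap m x) :=
  (dil_memLp' h m f).coeFn_toLp

theorem scal_dil (j : ℤ) (m : Nat.Primes) (k : ℤ) (a : ∀ q : Nat.Primes, ℚ_[(q : ℕ)]) (x : Adele) :
    scalFn (j + 1) m k a x = (dilR m : ℂ) * scalFn j m k a (dilMap m x) := by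
  unfold scalFn
  rw [tprod_scal, tprod_scal]
  have e1 : (∀ q, (dilMap m x).1.2 q ∈ cellB j m a q) ↔ ∀ q, x.1.2 q ∈ cellB (j + 1) m a q := by
    refine forall_congr' fun q => ?_
    simp only [dilMap, cellB]
    by_cases hq : (q : ℕ) ≤ (m : ℕ)
    · simp only [if_pos hq, pball, Set.mem_ofPred_eq, dil_padic]
    · simp only [if_neg hq]
  have e2 : (2 : ℝ) ^ j * (dilMap m x).1.1 = (2 : ℝ) ^ (j + 1) * x.1.1 := dil_real j x.1.1
  have e3 : ∀ b : ℝ, 0 < b → b ^ (((j + 1 : ℤ) : ℝ) / 2) = b ^ ((1 : ℝ) / 2) * b ^ ((j : ℝ) / 2) := by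
    intro b hb
    rw [← Real.rpow_add hb]
    congr 1
    push_cast
    ring
  have e4 : dilR m = (2 : ℝ) ^ ((1 : ℝ) / 2) * ∏ q ∈ primeS m, ((q : ℕ) : ℝ) ^ ((1 : ℝ) / 2) := by
    rw [dilR, Real.sqrt_eq_rpow, Real.mul_rpow (by norm_num) (by positivity),
      Real.finsetProd_rpow _ _ (fun _ _ => by positivity)]
  have e5 : ∏ q ∈ primeS m, ((q : ℕ) : ℝ) ^ (((j + 1 : ℤ) : ℝ) / 2)
      = (∏ q ∈ primeS m, ((q : ℕ) : ℝ) ^ ((1 : ℝ) / 2)) *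
        ∏ q ∈ primeS m, ((q : ℕ) : ℝ) ^ ((j : ℝ) / 2) := by
    rw [← Finset.prod_mul_distrib]
    exact Finset.prod_congr rfl fun q _ => e3 _ (by exact_mod_cast q.2.pos)
  simp only [e1]
  rw [e2, e3 2 (by norm_num), e4, e5, Complex.ofReal_mul, Complex.ofReal_mul, Complex.ofReal_mul]
  ring

/-- The generators of `V_j^{[m]}`. -/
def gens (μ : Measure Adele) (j : ℤ) (m : Nat.Primes) : Set (Lp ℂ 2 μ) :=
  {g : Lp ℂ 2 μ | ∃ (aI : ℤ) (a : ∀ q : Nat.Primes, ℚ_[(q : ℕ)]),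
    (∀ q : Nat.Primes, (q : ℕ) ≤ (m : ℕ) → a q ∈ Ip q) ∧
    (g : Adele → ℂ) =ᵐ[μ] scalFn j m aI a}

theorem dil_scal_ae (h : GoodM μp μ) (j : ℤ) (m : Nat.Primes) (k : ℤ)
    (a : ∀ q : Nat.Primes, ℚ_[(q : ℕ)]) (g : Lp ℂ 2 μ)
    (hg : (g : Adele → ℂ) =ᵐ[μ] scalFn j m k a) :
    (dilOp h m g : Adele → ℂ) =ᵐ[μ] scalFn (j + 1) m k a := by
  filter_upwards [dilOp_coe h m g, (dil_qmp h m).ae hg] with x h1 h2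
  rw [h1, h2, scal_dil]

theorem gens_succ (h : GoodM μp μ) (j : ℤ) (m : Nat.Primes) :
    gens μ (j + 1) m = dilOp h m '' gens μ j m := by
  ext g
  constructor
  · rintro ⟨k, a, ha, hg⟩
    refine ⟨_, ⟨k, a, ha, ucell_smul_ae h j m k a⟩, Lp.ext ?_⟩
    exact (dil_scal_ae h j m k a _ (ucell_smul_ae h j m k a)).trans hg.symm
  · rintro ⟨f, ⟨k, a, ha, hf⟩, rfl⟩
    exact ⟨k, a, ha, dil_scal_ae h j m k a f hf⟩

theorem partD (h : GoodM μp μ) (m : Nat.Primes) (S : Finset Nat.Primes)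
    (hS : ∀ q : Nat.Primes, q ∈ S ↔ (q : ℕ) ≤ (m : ℕ)) (j : ℤ) (f g : Lp ℂ 2 μ)
    (hg : (g : Adele → ℂ) =ᵐ[μ]
      (fun x => ((Real.sqrt (2 * ∏ q ∈ S, ((q : ℕ) : ℝ)) : ℝ) : ℂ) *
        (f : Adele → ℂ) (dilMap m x))) :
    f ∈ Vjm μ j m ↔ g ∈ Vjm μ (j + 1) m := by
  have hSm : S = primeS m := by
    ext q
    rw [hS, mem_primeS]
  subst hSm
  have hgD : g = dilOp h m f := Lp.ext (hg.trans (dilOp_coe h m f).symm)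
  subst hgD
  change f ∈ closure ((Submodule.span ℂ (gens μ j m) : Submodule ℂ (Lp ℂ 2 μ)) : Set (Lp ℂ 2 μ)) ↔
    dilOp h m f ∈
      closure ((Submodule.span ℂ (gens μ (j + 1) m) : Submodule ℂ (Lp ℂ 2 μ)) : Set (Lp ℂ 2 μ))
  have e : ((Submodule.span ℂ (gens μ (j + 1) m) : Submodule ℂ (Lp ℂ 2 μ)) : Set (Lp ℂ 2 μ))
      = dilOp h m '' (Submodule.span ℂ (gens μ j m) : Submodule ℂ (Lp ℂ 2 μ)) := by
    rw [gens_succ h]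
    have := Submodule.map_span (dilOp h m).toLinearMap (gens μ j m)
    exact (congrArg (fun W : Submodule ℂ (Lp ℂ 2 μ) => (W : Set (Lp ℂ 2 μ))) this).symm
  rw [e, (dilOp h m).isometry.isEmbedding.isInducing.closure_eq_preimage_closure_image]
  rfl
end

/-- Properties of the adelic multiresolution analysis: the spaces
`V_j` are increasing (a), their union is dense in `L²(𝔸, μ)` (b), their intersection is
trivial (c), `f ∈ V_j^{[m]}` iff the `m`-dilation of `f` lies in `V_{j+1}^{[m]}` (d), and
the integer/`I_q`-shifts of the scaling function `Φ` form an orthonormal basis of `V_0`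
(e).  Here `μ` is the adelic Haar measure, normalized as the product of Lebesgue measure
and of the Haar measures `μ_p` with `μ_p(ℤ_p) = 1`. -/
theorem adelic_MRA
    (μp : ∀ q : Nat.Primes, Measure ℚ_[(q : ℕ)])
    (hHaar : ∀ q, (μp q).IsAddHaarMeasure)
    (hnorm : ∀ q, μp q {x : ℚ_[(q : ℕ)] | ‖x‖ ≤ 1} = 1)
    (μ : Measure Adele)
    (hμ : ∀ E : Set ℝ, MeasurableSet E → ∀ S : Finset Nat.Primes,
      ∀ B : ∀ q : Nat.Primes, Set ℚ_[(q : ℕ)], (∀ q, MeasurableSet (B q)) →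
      μ {x : Adele | x.1.1 ∈ E ∧ (∀ q ∈ S, x.1.2 q ∈ B q) ∧ ∀ q ∉ S, ‖x.1.2 q‖ ≤ 1}
        = volume E * ∏ q ∈ S, μp q (B q)) :
    (∀ j : ℤ, VjAd μ j ≤ VjAd μ (j + 1)) ∧
    Dense (⋃ j : ℤ, (VjAd μ j : Set (Lp ℂ 2 μ))) ∧
    (⨅ j : ℤ, VjAd μ j) = ⊥ ∧
    (∀ (m : Nat.Primes) (S : Finset Nat.Primes),
      (∀ q : Nat.Primes, q ∈ S ↔ (q : ℕ) ≤ (m : ℕ)) →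
      ∀ (j : ℤ) (f g : Lp ℂ 2 μ),
        (g : Adele → ℂ) =ᵐ[μ]
          (fun x => ((Real.sqrt (2 * ∏ q ∈ S, ((q : ℕ) : ℝ)) : ℝ) : ℂ) *
            (f : Adele → ℂ) (dilMap m x)) →
        (f ∈ Vjm μ j m ↔ g ∈ Vjm μ (j + 1) m)) ∧
    ((∀ t s : IAdele,
        ∫ x, shiftPhi t.1 t.2.1 x * (starRingEnd ℂ) (shiftPhi s.1 s.2.1 x) ∂μ
          = if t = s then 1 else 0) ∧
     (∀ t : IAdele, ∃ g : Lp ℂ 2 μ, g ∈ VjAd μ 0 ∧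
        (g : Adele → ℂ) =ᵐ[μ] shiftPhi t.1 t.2.1) ∧
     (∀ f : Lp ℂ 2 μ, f ∈ VjAd μ 0 →
        (∀ t : IAdele,
          ∫ x, (f : Adele → ℂ) x * (starRingEnd ℂ) (shiftPhi t.1 t.2.1 x) ∂μ = 0) →
        f = 0)) := by
  have h : GoodM μp μ := ⟨hHaar, hnorm, hμ⟩
  exact ⟨partA h, partB h, partC h, partD h, partE1 h, partE2 h, partE3 h⟩
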